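/- Let Q = ℚ(√a,√b) be a biquadratic field (a, b distinct square-free integers not equal to 0 or 1) such that the family 𝓕₄(Q) is nonempty. Then for every 0 < ε < 1/4 sufficiently small and every integer ℓ ≥ 1 there exists a constant B₁ = B₁(ℓ,ε) such that for every X ≥ 1, aside from at most B₁·X^ε exceptional fields in 𝓕₄(Q;X), every field K ∈ 𝓕₄(Q;X) satisfies |Cl_K[ℓ]| ≪_{ℓ,ε} D_K^{1/2 − 1/(6ℓ) + ε}. -/

import Mathlib

/-! The bound holds for every field of the family, so the exceptional set is empty; all that is used
about the family is that the biquadratic field `Q = ℚ(√a, √b)` is fixed, since constants may depend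
on `Q`.

*Structure of the fields.* Let `K` be in the family. Restricting to `Q` identifies
`Gal(Q/ℚ)` with `D₄` modulo its centre, so the quadratic subfield of `K` is `ℚ(√d)` with `d` one of
`a`, `b`, `ab` up to squares, and `K` has an involution `τ` over it. An element `s` with `τ s = -s`
is a root of some `X ^ 4 - t X ^ 2 + n` with `t ^ 2 - 4 n = d □` and `n = d' □`, where `d'` belongs
to a second quadratic subfield of `Q` (`exists_involution`). If `(d | p) = 1` and `(d' | p) = -1`,
the two roots of `X ^ 2 - t X + n` modulo `p` have nonsquare product, so exactly one of them is a
square and the quartic has a root modulo `p`. This gives a prime of `K` above `p` that `τ` moves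
(`exists_moved_prime`), provided `p` does not divide `n`; the element `s` is found by Minkowski's
theorem with `n` polynomial in `D = D_K`, so only `O(log D)` primes are lost.

*Many such primes.* The condition on `p` depends only on `Q`. The weight
`(1 + χ₁)(1 - χ₂) = 1 + χ₁ - χ₂ - χ₁χ₂` attached to the quadratic characters of `d` and `d'` detects
it, and Mertens' theorem for non-principal characters (`char_mertens`, resting on `L(1, χ) ≠ 0`)
gives at least `M ^ (9 / 10)` of these primes up to any large `M` (`goodPrimes_card`). With
`M = D ^ (1 / (5 ℓ))` this exceeds `D ^ (1 / (6 ℓ))`, because `9 / 50 > 1 / 6`.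

*From primes to torsion.* The argument is the pigeonhole principle of Ellenberg and Venkatesh
(`torsion_mul_card_le`): if ideals `B i` of small norm are such that no quotient `B i ^ ℓ / B j ^ ℓ`
with `i ≠ j` has a generator of small height, then `|Cl_K[ℓ]|` times their number is
`O(D ^ (1 / 2 + ε))`. For moved primes the separation holds: a generator `x / y` of `P ^ ℓ / P' ^ ℓ`
cannot be fixed by `τ`, as otherwise `P ^ ℓ / P' ^ ℓ` would equal its image under `τ`. So
`θ = q ^ ℓ x / y`, with `q` the prime below `P'`, is an integer outside `ℚ(√d)`, and the independent
integers `1, √d, θ, √d θ` bound `D` by a constant times the fourth power of the height of `θ`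
(`abs_discr_le_of_relation`). This is impossible for large `D`, with `q ≤ D ^ (1 / (5 ℓ))`. -/

open IntermediateField

noncomputable section

abbrev Qbar : Type := AlgebraicClosure ℚ

noncomputable def galCl (K : IntermediateField ℚ Qbar) : IntermediateField ℚ Qbar :=
  normalClosure ℚ K Qbar

def IsD4Quartic (K : IntermediateField ℚ Qbar) : Prop :=
  Module.finrank ℚ K = 4 ∧
    Nonempty ((galCl K ≃ₐ[ℚ] galCl K) ≃* DihedralGroup 4)

open scoped Classical in
noncomputable def absDisc (K : IntermediateField ℚ Qbar) : ℕ :=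
  if h : FiniteDimensional ℚ K then
    haveI := h
    haveI : NumberField K := ⟨⟩
    (NumberField.discr K).natAbs
  else 0

def F4 (Q : IntermediateField ℚ Qbar) : Set (IntermediateField ℚ Qbar) :=
  {K | IsD4Quartic K ∧ Q ≤ galCl K}

def F4X (Q : IntermediateField ℚ Qbar) (X : ℝ) : Set (IntermediateField ℚ Qbar) :=
  {K | K ∈ F4 Q ∧ (absDisc K : ℝ) ≤ X}

noncomputable def torsionCount (K : IntermediateField ℚ Qbar) (ℓ : ℕ) : ℕ :=
  Nat.card {x : ClassGroup (NumberField.RingOfIntegers K) // x ^ ℓ = 1}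

/-! ### Mertens' theorem for non-principal characters -/

section Mertens
open Finset ArithmeticFunction ArithmeticFunction.zeta

/-- Partial summation: if the partial sums of `c` are bounded by `B` and `f` is nonnegative and
decreasing from `A` on, then every sum of `c m * f m` starting at `A` is at most `2 * B * f A`. -/
lemma abel_bound (c : ℕ → ℂ) (f : ℕ → ℝ) (B : ℝ) (hB : ∀ M, ‖∑ i ∈ range M, c i‖ ≤ B) (A : ℕ)
    (hf0 : ∀ m, A ≤ m → 0 ≤ f m) (hf : ∀ m, A ≤ m → f (m+1) ≤ f m) (M : ℕ) (hM : A ≤ M) :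
    ‖∑ m ∈ Ico A M, c m * (f m : ℂ)‖ ≤ 2 * B * f A := by
  have hB0 : 0 ≤ B := (norm_nonneg _).trans (hB 0)
  have key : ‖∑ m ∈ Ico A M, c m * (f m : ℂ) - (∑ i ∈ range M, c i) * f M
      + (∑ i ∈ range A, c i) * f A‖ ≤ B * (f A - f M) := by
    induction M, hM using Nat.le_induction with
    | base => simp
    | succ M hM ih =>
      rw [Finset.sum_Ico_succ_top hM]
      have : (∑ m ∈ Ico A M, c m * (f m : ℂ) + c M * f M - (∑ i ∈ range (M+1), c i) * f (M+1)
          + (∑ i ∈ range A, c i) * f A)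
        = (∑ m ∈ Ico A M, c m * (f m : ℂ) - (∑ i ∈ range M, c i) * f M
          + (∑ i ∈ range A, c i) * f A) + (∑ i ∈ range (M+1), c i) * ((f M - f (M+1) : ℝ) : ℂ) := by
        rw [Finset.sum_range_succ]; push_cast; ring
      rw [this]
      refine (norm_add_le _ _).trans ?_
      have h2 : ‖(∑ i ∈ range (M+1), c i) * ((f M - f (M+1) : ℝ) : ℂ)‖ ≤ B * (f M - f (M+1)) := by
        rw [norm_mul, Complex.norm_real, Real.norm_of_nonneg (by linarith [hf M hM])]
        exact mul_le_mul_of_nonneg_right (hB _) (by linarith [hf M hM])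
      linarith
  have h1 : ‖(∑ i ∈ range M, c i) * (f M : ℂ)‖ ≤ B * f M := by
    rw [norm_mul, Complex.norm_real, Real.norm_of_nonneg (hf0 M hM)]
    exact mul_le_mul_of_nonneg_right (hB _) (hf0 M hM)
  have h2 : ‖(∑ i ∈ range A, c i) * (f A : ℂ)‖ ≤ B * f A := by
    rw [norm_mul, Complex.norm_real, Real.norm_of_nonneg (hf0 A le_rfl)]
    exact mul_le_mul_of_nonneg_right (hB _) (hf0 A le_rfl)
  have : ∑ m ∈ Ico A M, c m * (f m : ℂ) = (∑ m ∈ Ico A M, c m * (f m : ℂ) - (∑ i ∈ range M, c i) * f M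
      + (∑ i ∈ range A, c i) * f A) + (∑ i ∈ range M, c i) * f M - (∑ i ∈ range A, c i) * f A := by ring
  rw [this]
  refine (norm_sub_le _ _).trans ?_
  have := norm_add_le (∑ m ∈ Ico A M, c m * (f m : ℂ) - (∑ i ∈ range M, c i) * f M
      + (∑ i ∈ range A, c i) * f A) ((∑ i ∈ range M, c i) * f M)
  linarith

lemma char_sum_bound {N : ℕ} [NeZero N] (χ : DirichletCharacter ℂ N) (hχ : χ ≠ 1) (M : ℕ) :
    ‖∑ i ∈ range M, χ (i : ZMod N)‖ ≤ N := by
  have hN : ∑ i ∈ range N, χ (i : ZMod N) = 0 := by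
    rw [← MulChar.sum_eq_zero_of_ne_one hχ]
    obtain ⟨n, rfl⟩ : ∃ n, N = n + 1 := ⟨N - 1, by have := NeZero.ne N; omega⟩
    rw [Finset.sum_range]
    refine Finset.sum_congr rfl fun i _ => ?_
    congr 1
    exact Fin.cast_val_eq_self i
  induction M using Nat.strong_induction_on with
  | _ M ih =>
    rcases lt_or_ge M N with h | h
    · refine (norm_sum_le _ _).trans ?_
      refine (Finset.sum_le_card_nsmul _ _ 1 fun i _ => χ.norm_le_one _).trans ?_
      simp; exact_mod_cast h.le
    · obtain ⟨k, rfl⟩ := Nat.exists_eq_add_of_le h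
      rw [Finset.sum_range_add, hN, zero_add]
      simp only [Nat.cast_add, CharP.cast_eq_zero, zero_add]
      exact ih k (by have := NeZero.pos N; omega)

/-- The series `L(1, χ)` converges with an explicit rate. The estimate is uniform in `s > 1`, where
the series converges absolutely, and passes to `s = 1` by continuity. -/
lemma char_LSeries_tail {N : ℕ} [NeZero N] (χ : DirichletCharacter ℂ N) (hχ : χ ≠ 1)
    (M : ℕ) (hM : 1 ≤ M) :
    ‖DirichletCharacter.LFunction χ 1 - ∑ m ∈ Ico 1 M, χ (m : ZMod N) / m‖ ≤ 2 * N / M := by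
  have main : ∀ s : ℝ, 1 < s →
      ‖DirichletCharacter.LFunction χ (s:ℂ) - ∑ m ∈ Ico 1 M, χ (m : ZMod N) / (m : ℂ) ^ (s:ℂ)‖ ≤ 2 * N / M := by
    intro s hs
    have hs' : 1 < (s : ℂ).re := by simpa
    rw [DirichletCharacter.LFunction_eq_LSeries χ hs']
    have hsum := (χ.LSeriesSummable_of_one_lt_re hs').hasSum.tendsto_sum_nat
    have hlim : Filter.Tendsto (fun n => ∑ i ∈ range n, LSeries.term (fun n => χ (n : ZMod N)) s i
        - ∑ m ∈ Ico 1 M, χ (m : ZMod N) / (m : ℂ) ^ (s:ℂ)) Filter.atTop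
        (nhds (LSeries (fun n => χ (n : ZMod N)) s - ∑ m ∈ Ico 1 M, χ (m : ZMod N) / (m : ℂ) ^ (s:ℂ))) :=
      hsum.sub_const _
    refine le_of_tendsto hlim.norm ?_
    filter_upwards [Filter.eventually_ge_atTop M] with K hK
    have e1 : ∑ i ∈ range K, LSeries.term (fun n => χ (n : ZMod N)) s i
        = ∑ m ∈ Ico 1 K, χ (m : ZMod N) / (m : ℂ) ^ (s:ℂ) := by
      rw [Finset.range_eq_Ico, Finset.sum_eq_sum_Ico_succ_bot (by omega)]
      simp only [LSeries.term_zero, zero_add]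
      refine Finset.sum_congr rfl fun m hm => ?_
      rw [LSeries.term_of_ne_zero (by simp at hm; omega)]
    rw [e1, ← Finset.sum_Ico_consecutive _ hM hK, add_sub_cancel_left]
    have e2 : ∑ m ∈ Ico M K, χ (m : ZMod N) / (m : ℂ) ^ (s:ℂ)
        = ∑ m ∈ Ico M K, χ (m : ZMod N) * (((m : ℝ) ^ (-s) : ℝ) : ℂ) := by
      refine Finset.sum_congr rfl fun m hm => ?_
      rw [Complex.ofReal_cpow (by positivity), div_eq_mul_inv, ← Complex.cpow_neg]
      push_cast; rfl
    rw [e2]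
    refine (abel_bound _ (fun m => (m:ℝ) ^ (-s)) N (char_sum_bound χ hχ) M (fun m _ => by positivity)
      (fun m hm => ?_) K hK).trans ?_
    · apply Real.rpow_le_rpow_of_nonpos
      · have : 1 ≤ m := by omega
        positivity
      · push_cast; linarith
      · linarith
    · rw [div_eq_mul_inv]
      refine mul_le_mul_of_nonneg_left ?_ (by positivity)
      rw [← Real.rpow_neg_one]
      exact Real.rpow_le_rpow_of_exponent_le (by exact_mod_cast hM) (by linarith)
  have hc : ContinuousAt (fun s : ℝ => ‖DirichletCharacter.LFunction χ (s:ℂ) -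
      ∑ m ∈ Ico 1 M, χ (m : ZMod N) / (m : ℂ) ^ (s:ℂ)‖) 1 := by
    apply ContinuousAt.norm
    apply ContinuousAt.sub
    · exact ((DirichletCharacter.differentiable_LFunction hχ).continuous.comp
        Complex.continuous_ofReal).continuousAt
    · apply Continuous.continuousAt
      refine continuous_finsetSum _ fun m hm => ?_
      have hm0 : (m : ℂ) ≠ 0 := by simp at hm; exact_mod_cast (by omega : m ≠ 0)
      refine continuous_const.div ?_ fun s => ?_
      · exact Complex.continuous_ofReal.const_cpow (Or.inl hm0)
      · simp [Complex.cpow_eq_zero_iff, hm0]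
  have := le_of_tendsto (hc.tendsto.mono_left (nhdsWithin_le_nhds (s := Set.Ioi 1)))
    (Filter.eventually_of_mem self_mem_nhdsWithin fun s hs => main s hs)
  simpa using this

/-- Boundedness of the sums `∑ χ(m) log m / m`; partial summation starts at `m = 3`, from where
`log m / m` decreases. -/
lemma char_log_sum_bound {N : ℕ} [NeZero N] (χ : DirichletCharacter ℂ N) (hχ : χ ≠ 1) :
    ∃ C : ℝ, ∀ M : ℕ, ‖∑ m ∈ Ioc 0 M, χ (m : ZMod N) * ((Real.log m / m : ℝ) : ℂ)‖ ≤ C := by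
  refine ⟨∑ m ∈ Ico (0:ℕ) 3, ‖χ (m : ZMod N) * ((Real.log m / m : ℝ) : ℂ)‖ + 2 * N * (Real.log (3:ℕ) / (3:ℕ)), fun M => ?_⟩
  have e : ∑ m ∈ Ioc 0 M, χ (m : ZMod N) * ((Real.log m / m : ℝ) : ℂ)
    = ∑ m ∈ Ico (0:ℕ) (M+1), χ (m : ZMod N) * ((Real.log m / m : ℝ) : ℂ) := by
    rw [Finset.sum_eq_sum_Ico_succ_bot (by omega)]
    simp only [CharP.cast_eq_zero, div_zero, Complex.ofReal_zero, mul_zero, zero_add]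
    rfl
  rw [e]
  have hpos : 0 ≤ 2 * N * (Real.log (3:ℕ) / (3:ℕ)) := by positivity
  rcases le_or_gt 3 (M+1) with h | h
  · rw [← Finset.sum_Ico_consecutive _ (Nat.zero_le 3) h]
    refine (norm_add_le _ _).trans (add_le_add (norm_sum_le _ _) ?_)
    refine abel_bound _ (fun m => Real.log m / m) N (char_sum_bound χ hχ) 3 (fun m hm => by positivity) (fun m hm => ?_) _ h
    have h3 : Real.exp 1 ≤ (m:ℝ) := by
      have := Real.exp_one_lt_d9
      have : (3:ℝ) ≤ m := by exact_mod_cast hm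
      linarith
    exact Real.log_div_self_antitoneOn (by simpa using h3) (by simp only [Set.mem_Ici]; push_cast; linarith) (by push_cast; linarith)
  · refine (norm_sum_le _ _).trans ?_
    have := Finset.sum_le_sum_of_subset_of_nonneg (f := fun m : ℕ => ‖χ (m : ZMod N) * ((Real.log m / m : ℝ) : ℂ)‖)
      (Finset.Ico_subset_Ico_right h.le : Ico 0 (M+1) ⊆ Ico 0 3) (fun _ _ _ => norm_nonneg _)
    linarith

/-- `χ(n)Λ(n)/n` as an arithmetic function. -/
noncomputable def chiLambda {N : ℕ} (χ : DirichletCharacter ℂ N) : ArithmeticFunction ℂ :=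
  ⟨fun n => χ (n : ZMod N) * ((Λ n / n : ℝ) : ℂ), by simp⟩

/-- `χ(n)/n` as an arithmetic function; division by zero gives the required value `0` at `n = 0`. -/
noncomputable def chiInv {N : ℕ} (χ : DirichletCharacter ℂ N) : ArithmeticFunction ℂ :=
  ⟨fun n => χ (n : ZMod N) / (n : ℂ), by simp⟩

/-- The twist by `χ(n)/n` of the identity `Λ * 1 = log`. -/
lemma chiLambda_mul {N : ℕ} (χ : DirichletCharacter ℂ N) (n : ℕ) :
    (chiLambda χ * chiInv χ) n = χ (n : ZMod N) * ((Real.log n / n : ℝ) : ℂ) := by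
  rw [ArithmeticFunction.mul_apply, ← ArithmeticFunction.vonMangoldt_sum]
  rcases eq_or_ne n 0 with rfl | hn
  · simp
  rw [Finset.sum_div, Complex.ofReal_sum, Finset.mul_sum,
    Nat.sum_divisorsAntidiagonal (fun d e => chiLambda χ d * chiInv χ e)]
  refine Finset.sum_congr rfl fun d hd => ?_
  obtain ⟨⟨e, rfl⟩, -⟩ := Nat.mem_divisors.mp hd
  have hd0 : d ≠ 0 := by rintro rfl; simp at hn
  have he0 : e ≠ 0 := by rintro rfl; simp at hn
  rw [Nat.mul_div_cancel_left _ (Nat.pos_of_ne_zero hd0)]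
  simp only [chiLambda, chiInv, ArithmeticFunction.coe_mk]
  have : (d:ℂ) ≠ 0 := by exact_mod_cast hd0
  have : (e:ℂ) ≠ 0 := by exact_mod_cast he0
  push_cast
  rw [map_mul]
  field_simp

lemma sum_vonMangoldt_le (M : ℕ) : ∑ d ∈ Ioc 0 M, Λ d ≤ (Real.log 4 + 4) * M := by
  have := Chebyshev.psi_le_const_mul_self (x := M) (by positivity)
  simpa [Chebyshev.psi] using this

/-- Mertens' theorem for a non-principal character: the sum `∑ χ(n)Λ(n)/n` stays bounded. -/
lemma char_mertens {N : ℕ} [NeZero N] (χ : DirichletCharacter ℂ N) (hχ : χ ≠ 1) :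
    ∃ C : ℝ, ∀ M : ℕ, ‖∑ d ∈ Ioc 0 M, χ (d : ZMod N) * ((Λ d / d : ℝ) : ℂ)‖ ≤ C := by
  obtain ⟨C₁, hC₁⟩ := char_log_sum_bound χ hχ
  set L := DirichletCharacter.LFunction χ 1 with hL
  have hL0 : L ≠ 0 := DirichletCharacter.LFunction_apply_one_ne_zero hχ
  refine ⟨(C₁ + 2 * N * (Real.log 4 + 4)) / ‖L‖, fun M => ?_⟩
  rw [le_div_iff₀ (norm_pos_iff.mpr hL0), ← norm_mul]
  rcases Nat.eq_zero_or_pos M with rfl | hM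
  · have := hC₁ 0
    simp only [Ioc_self, sum_empty, norm_zero, zero_mul] at this ⊢
    have : 0 ≤ Real.log 4 := Real.log_nonneg (by norm_num)
    positivity
  have h1 := ArithmeticFunction.sum_Ioc_mul_eq_sum_sum (chiLambda χ) (chiInv χ) M
  simp_rw [chiLambda_mul] at h1
  -- replace each inner sum `∑ χ(m)/m`, `m ≤ M / d`, by its limit `L`, with an error `O(d / M)`
  have h2 : (∑ d ∈ Ioc 0 M, χ (d : ZMod N) * ((Λ d / d : ℝ) : ℂ)) * L
      = (∑ m ∈ Ioc 0 M, χ (m : ZMod N) * ((Real.log m / m : ℝ) : ℂ))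
        + ∑ d ∈ Ioc 0 M, chiLambda χ d * (L - ∑ m ∈ Ioc 0 (M / d), chiInv χ m) := by
    rw [h1, Finset.sum_mul, ← Finset.sum_add_distrib]
    refine Finset.sum_congr rfl fun d _ => ?_
    simp only [chiLambda, ArithmeticFunction.coe_mk]; ring
  rw [h2]
  refine (norm_add_le _ _).trans (add_le_add (hC₁ M) ?_)
  have h3 : ∀ d ∈ Ioc 0 M, ‖chiLambda χ d * (L - ∑ m ∈ Ioc 0 (M / d), chiInv χ m)‖
      ≤ Λ d * (2 * N / M) := by
    intro d hd
    simp only [Finset.mem_Ioc] at hd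
    have hd0 : (0:ℝ) < d := by exact_mod_cast hd.1
    have hM0 : (0:ℝ) < M := by exact_mod_cast hM
    rw [norm_mul]
    have ha : ‖chiLambda χ d‖ ≤ Λ d / d := by
      simp only [chiLambda, ArithmeticFunction.coe_mk, norm_mul, Complex.norm_real]
      rw [Real.norm_of_nonneg (div_nonneg vonMangoldt_nonneg hd0.le)]
      exact mul_le_of_le_one_left (div_nonneg vonMangoldt_nonneg hd0.le) (χ.norm_le_one _)
    have hb : ‖L - ∑ m ∈ Ioc 0 (M / d), chiInv χ m‖ ≤ 2 * N * d / M := by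
      have := char_LSeries_tail χ hχ (M / d + 1) (Nat.le_add_left _ _)
      refine (le_of_eq ?_).trans (this.trans ?_)
      · rfl
      · rw [div_le_div_iff₀ (by positivity) hM0, mul_assoc, mul_assoc, mul_assoc]
        gcongr
        have : M < d * (M / d + 1) := Nat.lt_mul_div_succ M hd.1
        exact_mod_cast this.le
    calc _ ≤ Λ d / d * (2 * N * d / M) := mul_le_mul ha hb (norm_nonneg _) (div_nonneg vonMangoldt_nonneg hd0.le)
      _ = _ := by field_simp
  refine (norm_sum_le _ _).trans ((Finset.sum_le_sum h3).trans ?_)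
  rw [← Finset.sum_mul]
  have hM0 : (0:ℝ) < M := by exact_mod_cast hM
  calc _ ≤ ((Real.log 4 + 4) * M) * (2 * N / M) := mul_le_mul_of_nonneg_right (sum_vonMangoldt_le M) (by positivity)
    _ = _ := by field_simp

lemma sum_zeta_real (K : ℕ) : ∑ m ∈ Ioc 0 K, ((ζ : ArithmeticFunction ℝ) m) = (K : ℝ) := by
  conv_rhs => rw [← ArithmeticFunction.sum_Ioc_zeta K]
  push_cast
  rfl

lemma mertens_lower (M : ℕ) (hM : 1 ≤ M) : Real.log M - 1 ≤ ∑ d ∈ Ioc 0 M, Λ d / d := by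
  have h1 := ArithmeticFunction.sum_Ioc_mul_eq_sum_sum Λ (ζ : ArithmeticFunction ℝ) M
  rw [vonMangoldt_mul_zeta] at h1
  have hM0 : (0:ℝ) < M := by exact_mod_cast hM
  have h2 : ∑ n ∈ Ioc 0 M, log n = Real.log (M.factorial) := by
    clear h1 hM hM0
    induction M with
    | zero => simp
    | succ M ih =>
      rw [Finset.sum_Ioc_succ_top (by omega), ih, Nat.factorial_succ, Nat.cast_mul, Real.log_mul
        (by positivity) (by positivity), add_comm]; rfl
  have h3 : M * Real.log M - M ≤ Real.log (M.factorial) := by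
    have := Real.pow_div_factorial_le_exp M (by positivity) M
    rw [div_le_iff₀ (by positivity)] at this
    have := Real.log_le_log (by positivity) this
    rw [Real.log_pow, Real.log_mul (by positivity) (by positivity), Real.log_exp] at this
    linarith
  have h4 : ∑ n ∈ Ioc 0 M, Λ n * ∑ m ∈ Ioc 0 (M / n), ((ζ : ArithmeticFunction ℝ) m) ≤
     ∑ n ∈ Ioc 0 M, M * (Λ n / n) := by
    refine Finset.sum_le_sum fun n hn => ?_
    simp only [Finset.mem_Ioc] at hn
    have : ∑ m ∈ Ioc 0 (M / n), ((ζ : ArithmeticFunction ℝ) m) = ((M / n : ℕ) : ℝ) := by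
      exact sum_zeta_real _
    rw [this]
    have := @Nat.cast_div_le ℝ _ _ _ M n
    calc _ ≤ Λ n * (M / n) := mul_le_mul_of_nonneg_left this vonMangoldt_nonneg
      _ = _ := by ring
  rw [← Finset.mul_sum, ← h1, h2] at h4
  have : (M:ℝ) * (Real.log M - 1) ≤ M * ∑ d ∈ Ioc 0 M, Λ d / d := by linarith
  exact le_of_mul_le_mul_left this hM0

lemma mertens_upper (M : ℕ) (hM : 1 ≤ M) : ∑ d ∈ Ioc 0 M, Λ d / d ≤ Real.log M + (Real.log 4 + 4) := by
  have h1 := ArithmeticFunction.sum_Ioc_mul_eq_sum_sum Λ (ζ : ArithmeticFunction ℝ) M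
  rw [vonMangoldt_mul_zeta] at h1
  have hM0 : (0:ℝ) < M := by exact_mod_cast hM
  have h2 : ∑ n ∈ Ioc 0 M, log n ≤ M * Real.log M := by
    calc _ ≤ ∑ n ∈ Ioc 0 M, Real.log M := by
          refine Finset.sum_le_sum fun n hn => ?_
          simp only [Finset.mem_Ioc] at hn
          exact Real.log_le_log (by exact_mod_cast hn.1) (by exact_mod_cast hn.2)
      _ = _ := by simp
  have h4 : ∑ n ∈ Ioc 0 M, (M * (Λ n / n) - Λ n) ≤ ∑ n ∈ Ioc 0 M, Λ n * ∑ m ∈ Ioc 0 (M / n), ((ζ : ArithmeticFunction ℝ) m) := by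
    refine Finset.sum_le_sum fun n hn => ?_
    simp only [Finset.mem_Ioc] at hn
    have : ∑ m ∈ Ioc 0 (M / n), ((ζ : ArithmeticFunction ℝ) m) = ((M / n : ℕ) : ℝ) := by
      exact sum_zeta_real _
    rw [this]
    have hn0 : (0:ℝ) < n := by exact_mod_cast hn.1
    have : (M:ℝ) / n - 1 ≤ (M / n : ℕ) := by
      rw [sub_le_iff_le_add, div_le_iff₀ hn0]
      have : M < n * (M / n + 1) := Nat.lt_mul_div_succ M hn.1
      rw [mul_comm]
      exact_mod_cast this.le
    calc _ = Λ n * (M / n - 1) := by ring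
      _ ≤ _ := mul_le_mul_of_nonneg_left this vonMangoldt_nonneg
  rw [Finset.sum_sub_distrib, ← Finset.mul_sum, ← h1] at h4
  have h5 := sum_vonMangoldt_le M
  have : (M:ℝ) * ∑ d ∈ Ioc 0 M, Λ d / d ≤ M * (Real.log M + (Real.log 4 + 4)) := by linarith
  exact le_of_mul_le_mul_left this hM0

end Mertens

/-! ### Primes with prescribed quadratic characters -/

section GoodPrimes
open Finset ArithmeticFunction ArithmeticFunction.zeta

/-- The character `J(c | ·)` is non-principal for squarefree `c ≠ 1`. If an odd prime `q` divides `c`,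
the Chinese remainder theorem gives `r` that is a nonsquare modulo `q` and `1` modulo `8c / q`, and
reciprocity gives `J(c | r) = J(r | q) = -1`. Otherwise `c` is `-1`, `2` or `-2`. -/
lemma exists_jacobi_squarefree (c : ℤ) (hc : Squarefree c) (h1 : c ≠ 1) :
    ∃ r : ℕ, Nat.Coprime r (4 * c.natAbs) ∧ jacobiSym c r = -1 := by
  have hc0 : c ≠ 0 := hc.ne_zero
  by_cases h : ∃ q : ℕ, q.Prime ∧ q ≠ 2 ∧ (q : ℤ) ∣ c
  · obtain ⟨q, hq, hq2, c', rfl⟩ := h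
    haveI := Fact.mk hq
    have hc'0 : c' ≠ 0 := by rintro rfl; simp at hc0
    have hcop : Nat.Coprime (8 * c'.natAbs) q := by
      rw [Nat.coprime_comm, hq.coprime_iff_not_dvd]
      intro hd
      rcases (Nat.Prime.dvd_mul hq).mp hd with h8 | h8
      · have : q ∣ 2 ^ 3 := h8
        exact hq2 ((Nat.prime_dvd_prime_iff_eq hq Nat.prime_two).mp (hq.dvd_of_dvd_pow this))
      · have := hc q (mul_dvd_mul_left _ (Int.natCast_dvd.mpr h8))
        rw [Int.isUnit_iff_natAbs_eq] at this
        simp at this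
        exact hq.one_lt.ne' this
    obtain ⟨u, hu⟩ := FiniteField.exists_nonsquare (F := ZMod q) (by rwa [ZMod.ringChar_zmod_n])
    obtain ⟨r, hr1, hr2⟩ := Nat.chineseRemainder hcop 1 u.val
    have hr8 : r % 8 = 1 := by
      have := (Nat.ModEq.of_mul_right _ hr1)
      simpa [Nat.ModEq] using this
    have hrc : r % (4 * c'.natAbs) = 1 := by
      have : r ≡ 1 [MOD (4 * c'.natAbs)] := hr1.of_dvd ⟨2, by ring⟩
      rw [this]; apply Nat.mod_eq_of_lt; have := Int.natAbs_pos.mpr hc'0; omega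
    have hodd : Odd r := Nat.odd_iff.mpr (by omega)
    have hqodd : Odd q := hq.odd_of_ne_two hq2
    have hJq : jacobiSym (q : ℤ) r = -1 := by
      rw [← jacobiSym.quadratic_reciprocity_one_mod_four (a := r) (b := q) (by omega) hqodd,
        ← jacobiSym.legendreSym.to_jacobiSym, legendreSym.eq_neg_one_iff]
      have : ((r : ℤ) : ZMod q) = u := by
        have h := (ZMod.natCast_eq_natCast_iff _ _ _).mpr hr2
        rw [ZMod.natCast_zmod_val] at h
        exact_mod_cast h
      rwa [this]
    have hJc : jacobiSym c' r = 1 := by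
      rw [jacobiSym.mod_right c' hodd, hrc, jacobiSym.one_right]
    have hJ : jacobiSym (q * c') r = -1 := by rw [jacobiSym.mul_left, hJq, hJc]; rfl
    refine ⟨r, ?_, hJ⟩
    have h2 : Nat.Coprime r 4 := by
      have : Nat.Coprime r (2^2) := Nat.Coprime.pow_right 2 (Nat.coprime_two_right.mpr hodd)
      exact this
    refine Nat.Coprime.mul_right h2 ?_
    by_contra hcon
    haveI : NeZero r := ⟨by omega⟩
    have : jacobiSym (q * c') r = 0 := jacobiSym.eq_zero_iff_not_coprime.mpr (by
      rw [Int.gcd_comm]; simpa [Int.gcd, Nat.Coprime] using hcon)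
    rw [this] at hJ; norm_num at hJ
  · push Not at h
    have hn : ∀ q : ℕ, q.Prime → q ∣ c.natAbs → q = 2 := by
      intro q hq hd
      by_contra h2
      exact h q hq h2 (Int.natCast_dvd.mpr hd)
    have hpow := Nat.eq_prime_pow_of_unique_prime_dvd (Int.natAbs_ne_zero.mpr hc0) (fun {q} hq hd => hn q hq hd)
    set k := c.natAbs.primeFactorsList.length
    have hk : k ≤ 1 := by
      by_contra hk
      have : (2:ℤ) * 2 ∣ c := by
        rw [← Int.natAbs_dvd_natAbs, hpow]
        exact pow_dvd_pow 2 (by omega : 2 ≤ k)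
      have := hc _ this
      rw [Int.isUnit_iff_natAbs_eq] at this; simp at this
    interval_cases hkk : k
    · have : c = -1 := by omega
      subst this; exact ⟨3, by norm_num, by norm_num⟩
    · have : c = 2 ∨ c = -2 := by omega
      rcases this with rfl | rfl
      · exact ⟨3, by norm_num, by norm_num⟩
      · exact ⟨5, by norm_num, by norm_num⟩

/-- Arbitrarily large primes at which `a` is not a square, from Dirichlet's theorem on primes in
arithmetic progressions. -/
lemma exists_prime_jacobi (a : ℤ) (ha : ¬ IsSquare a) (N : ℕ) :
    ∃ p : ℕ, p.Prime ∧ N < p ∧ jacobiSym a p = -1 := by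
  have ha0 : a ≠ 0 := by rintro rfl; exact ha ⟨0, rfl⟩
  obtain ⟨m, s, hms, hsq⟩ := Nat.sq_mul_squarefree a.natAbs
  obtain ⟨c, hac, hcm⟩ : ∃ c : ℤ, a = s ^ 2 * c ∧ c.natAbs = m := by
    rcases Int.natAbs_eq a with h | h
    · exact ⟨m, by rw [h, ← hms]; push_cast; ring, by simp⟩
    · exact ⟨-m, by rw [h, ← hms]; push_cast; ring, by simp⟩
  have hcs : Squarefree c := by rw [← Int.squarefree_natAbs, hcm]; exact hsq
  have hc1 : c ≠ 1 := by rintro rfl; exact ha ⟨s, by rw [hac]; ring⟩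
  have hs0 : s ≠ 0 := by rintro rfl; simp at hac; exact ha0 hac
  obtain ⟨r, hr, hJ⟩ := exists_jacobi_squarefree c hcs hc1
  have : NeZero (4 * c.natAbs) := ⟨by have := Int.natAbs_pos.mpr hcs.ne_zero; omega⟩
  obtain ⟨p, hpN, hp, hpr⟩ := Nat.forall_exists_prime_gt_and_eq_mod
    ((ZMod.isUnit_iff_coprime r _).mpr hr) (N + s + 2)
  have hpr' := (ZMod.natCast_eq_natCast_iff _ _ _).mp hpr
  refine ⟨p, hp, by omega, ?_⟩
  have hpodd : Odd p := hp.odd_of_ne_two (by omega)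
  have hrodd : Odd r := Nat.coprime_two_right.mp (hr.coprime_dvd_right ⟨2 * c.natAbs, by ring⟩)
  rw [hac, jacobiSym.mul_left, jacobiSym.sq_one', jacobiSym.mod_right c hpodd, hpr',
    ← jacobiSym.mod_right c hrodd, hJ, one_mul]
  rw [Int.gcd_natCast_natCast]
  exact Nat.Coprime.symm ((Nat.Prime.coprime_iff_not_dvd hp).mpr fun h => by
    have := Nat.le_of_dvd (Nat.pos_of_ne_zero hs0) h; omega)

open Classical in
/-- The character `n ↦ J(a | n)` modulo a multiple `N` of `4|a|`. -/
noncomputable def jchar (a : ℤ) (N : ℕ) [NeZero N] (h : 4 * a.natAbs ∣ N) : DirichletCharacter ℂ N where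
  toFun x := if IsUnit x then ((jacobiSym a x.val : ℤ) : ℂ) else 0
  map_one' := by
    have h1 : (1 : ZMod N).val = 1 % N := by rw [← Nat.cast_one, ZMod.val_natCast]
    have hN : 1 < N := by
      have := NeZero.pos N
      by_contra hc
      have : N = 1 := by omega
      subst this
      have := Nat.dvd_one.mp h
      omega
    rw [if_pos isUnit_one, h1, Nat.mod_eq_of_lt hN]; simp
  map_mul' x y := by
    by_cases hx : IsUnit x <;> by_cases hy : IsUnit y
    · have hxy := hx.mul hy
      rw [if_pos hx, if_pos hy, if_pos hxy, ← Int.cast_mul]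
      congr 1
      have odd_of : ∀ z : ZMod N, IsUnit z → Odd z.val := by
        intro z hz
        have : Nat.Coprime z.val N := by
          rw [← ZMod.isUnit_iff_coprime, ZMod.natCast_zmod_val]; exact hz
        exact Nat.coprime_two_right.mp (this.coprime_dvd_right (Dvd.dvd.trans ⟨2 * a.natAbs, by ring⟩ h))
      rw [jacobiSym.mod_right a (odd_of _ hxy), ZMod.val_mul, Nat.mod_mod_of_dvd _ h,
        ← jacobiSym.mod_right a ((odd_of x hx).mul (odd_of y hy)),
        jacobiSym.mul_right' _ (odd_of x hx).pos.ne' (odd_of y hy).pos.ne']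
    · have : ¬ IsUnit (x * y) := fun h => hy (isUnit_of_mul_isUnit_right h)
      simp [hy, this]
    · have : ¬ IsUnit (x * y) := fun h => hx (isUnit_of_mul_isUnit_left h)
      simp [hx, this]
    · have : ¬ IsUnit (x * y) := fun h => hx (isUnit_of_mul_isUnit_left h)
      simp [hx, this]
  map_nonunit' x hx := by simp [hx]

lemma jchar_apply (a : ℤ) (N : ℕ) [NeZero N] (h : 4 * a.natAbs ∣ N) (n : ℕ) (hn : n.Coprime N) :
    jchar a N h (n : ZMod N) = ((jacobiSym a n : ℤ) : ℂ) := by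
  have hu : IsUnit (n : ZMod N) := (ZMod.isUnit_iff_coprime _ _).mpr hn
  have hodd : Odd n := Nat.coprime_two_right.mp
    (hn.coprime_dvd_right (Dvd.dvd.trans ⟨2 * a.natAbs, by ring⟩ h))
  have hodd' : Odd (n % N) := by
    have h2 : 2 ∣ N := Dvd.dvd.trans ⟨2 * a.natAbs, by ring⟩ h
    rw [Nat.odd_iff, Nat.mod_mod_of_dvd _ h2]; exact Nat.odd_iff.mp hodd
  change (if IsUnit (n : ZMod N) then ((jacobiSym a (n : ZMod N).val : ℤ) : ℂ) else 0) = _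
  rw [if_pos hu, ZMod.val_natCast, jacobiSym.mod_right a hodd', Nat.mod_mod_of_dvd _ h,
    ← jacobiSym.mod_right a hodd]

/-- The primes at which `d` is a nonzero square and `d'` is not a square. -/
def goodPrimes (d d' : ℤ) (M : ℕ) : Finset ℕ :=
  (Ioc 0 M).filter fun p => p.Prime ∧ p ≠ 2 ∧ jacobiSym d p = 1 ∧ jacobiSym d' p = -1

/-- A weighted count of the good primes between `Z` and `M`. The weight
`(1 + χ₁)(1 - χ₂) = 1 + χ₁ - χ₂ - χ₁χ₂` vanishes at all other primes not dividing the modulus, and its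
Mertens sum is `log M + O(1)` because all three characters are non-principal. Prime powers
contribute at most `4 / Z * (ψ M - θ M)`. -/
lemma goodPrimes_mertens (d d' : ℤ) (hd : ¬ IsSquare d) (hd' : ¬ IsSquare d') (hdd : ¬ IsSquare (d * d')) :
    ∃ (C : ℝ) (N : ℕ), ∀ Z M : ℕ, 1 ≤ Z → N ≤ Z → Z ≤ M →
      Real.log M - Real.log Z - C ≤ ((goodPrimes d d' M).card * (4 * Real.log M / Z)
        + 4 / Z * (Chebyshev.psi M - Chebyshev.theta M)) := by
  have hd0 : d ≠ 0 := by rintro rfl; exact hd ⟨0, rfl⟩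
  have hd0' : d' ≠ 0 := by rintro rfl; exact hd' ⟨0, rfl⟩
  set N := 4 * (d * d').natAbs with hN
  haveI : NeZero N := ⟨by have := Int.natAbs_pos.mpr (mul_ne_zero hd0 hd0'); omega⟩
  have h1 : 4 * d.natAbs ∣ N := by rw [hN, Int.natAbs_mul]; exact ⟨d'.natAbs, by ring⟩
  have h2 : 4 * d'.natAbs ∣ N := by rw [hN, Int.natAbs_mul]; exact ⟨d.natAbs, by ring⟩
  set χ₁ := jchar d N h1
  set χ₂ := jchar d' N h2
  have cop : ∀ p : ℕ, p.Prime → N < p → p.Coprime N := fun p hp hNp =>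
    (Nat.Prime.coprime_iff_not_dvd hp).mpr fun h => by
      have := Nat.le_of_dvd (NeZero.pos N) h; omega
  have hne : ∀ (χ : DirichletCharacter ℂ N) (a : ℤ), ¬ IsSquare a →
      (∀ p : ℕ, p.Coprime N → χ (p : ZMod N) = ((jacobiSym a p : ℤ) : ℂ)) → χ ≠ 1 := by
    rintro χ a ha hχ rfl
    obtain ⟨p, hp, hNp, hJ⟩ := exists_prime_jacobi a ha N
    have := hχ p (cop p hp hNp)
    rw [hJ, MulChar.one_apply ((ZMod.isUnit_iff_coprime _ _).mpr (cop p hp hNp))] at this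
    norm_num at this
  obtain ⟨C₁, hC₁⟩ := char_mertens χ₁ (hne χ₁ d hd (jchar_apply d N h1))
  obtain ⟨C₂, hC₂⟩ := char_mertens χ₂ (hne χ₂ d' hd' (jchar_apply d' N h2))
  obtain ⟨C₃, hC₃⟩ := char_mertens (χ₁ * χ₂) (hne (χ₁ * χ₂) (d * d') hdd (fun p hp => by
    rw [MulChar.mul_apply, jchar_apply d N h1 p hp, jchar_apply d' N h2 p hp, jacobiSym.mul_left]; push_cast; rfl))
  -- off the residues coprime to `N` the characters vanish, so the weight there is `1`
  set v : ℕ → ℝ := fun n => if n.Coprime N then (1 + (jacobiSym d n : ℤ)) * (1 - (jacobiSym d' n : ℤ)) else 1 with hv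
  have hvc : ∀ n : ℕ, ((v n : ℝ) : ℂ) = 1 + χ₁ (n : ZMod N) - χ₂ (n : ZMod N) - (χ₁ * χ₂) (n : ZMod N) := by
    intro n
    rw [MulChar.mul_apply]
    by_cases hn : n.Coprime N
    · rw [jchar_apply d N h1 n hn, jchar_apply d' N h2 n hn]
      simp only [hv, if_pos hn]; push_cast; ring
    · have : ¬ IsUnit (n : ZMod N) := fun h => hn ((ZMod.isUnit_iff_coprime _ _).mp h)
      rw [χ₁.map_nonunit this, χ₂.map_nonunit this]
      simp [hv, if_neg hn]
  have hv0 : ∀ n, 0 ≤ v n ∧ v n ≤ 4 := by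
    intro n
    simp only [hv]
    split_ifs
    · rcases jacobiSym.trichotomy d n with h | h | h <;> rcases jacobiSym.trichotomy d' n with h' | h' | h' <;>
        rw [h, h'] <;> norm_num
    · norm_num
  have hsum : ∀ M : ℕ, |∑ n ∈ Ioc 0 M, v n * (Λ n / n) - ∑ n ∈ Ioc 0 M, Λ n / n| ≤ C₁ + C₂ + C₃ := by
    intro M
    have e : ((∑ n ∈ Ioc 0 M, v n * (Λ n / n) - ∑ n ∈ Ioc 0 M, Λ n / n : ℝ) : ℂ)
      = ∑ n ∈ Ioc 0 M, χ₁ (n : ZMod N) * ((Λ n / n : ℝ) : ℂ) - ∑ n ∈ Ioc 0 M, χ₂ (n : ZMod N) * ((Λ n / n : ℝ) : ℂ)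
        - ∑ n ∈ Ioc 0 M, (χ₁ * χ₂) (n : ZMod N) * ((Λ n / n : ℝ) : ℂ) := by
      rw [Complex.ofReal_sub, Complex.ofReal_sum, Complex.ofReal_sum]
      simp only [Complex.ofReal_mul, hvc]
      rw [← Finset.sum_sub_distrib, ← Finset.sum_sub_distrib, ← Finset.sum_sub_distrib]
      refine Finset.sum_congr rfl fun n _ => by ring
    rw [← Real.norm_eq_abs, ← Complex.norm_real, e]
    refine (norm_sub_le _ _).trans (add_le_add ((norm_sub_le _ _).trans (add_le_add (hC₁ M) (hC₂ M))) (hC₃ M))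
  refine ⟨2 * (C₁ + C₂ + C₃) + (Real.log 4 + 4) + 1, N, fun Z M hZ hNZ hZM => ?_⟩
  have hZ0 : (0:ℝ) < Z := by exact_mod_cast hZ
  have a1 := abs_le.mp (hsum M)
  have a2 := abs_le.mp (hsum Z)
  have a3 := mertens_lower M (hZ.trans hZM)
  have a4 := mertens_upper Z hZ
  have a5 : ∑ n ∈ Ioc 0 M, v n * (Λ n / n) = ∑ n ∈ Ioc 0 Z, v n * (Λ n / n) + ∑ n ∈ Ioc Z M, v n * (Λ n / n) := by
    rw [Finset.sum_Ioc_consecutive _ (Nat.zero_le _) hZM]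
  suffices h : ∑ n ∈ Ioc Z M, v n * (Λ n / n) ≤ ((goodPrimes d d' M).card * (4 * Real.log M / Z)
        + 4 / Z * (Chebyshev.psi M - Chebyshev.theta M)) by linarith
  rw [← Finset.sum_filter_add_sum_filter_not (Ioc Z M) (fun n => n.Prime)]
  refine add_le_add ?_ ?_
  · rw [← nsmul_eq_mul, ← Finset.sum_const]
    have hsub : ∑ n ∈ (Ioc Z M).filter (fun n => n.Prime), v n * (Λ n / n)
        = ∑ n ∈ ((Ioc Z M).filter (fun n => n.Prime)).filter (fun n => n ∈ goodPrimes d d' M), v n * (Λ n / n) := by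
      symm
      apply Finset.sum_filter_of_ne
      intro p hp hne
      simp only [Finset.mem_filter, Finset.mem_Ioc] at hp
      obtain ⟨⟨hZp, hpM⟩, hpp⟩ := hp
      have hc : p.Coprime N := cop p hpp (by omega)
      have hvp : v p ≠ 0 := left_ne_zero_of_mul hne
      simp only [hv, if_pos hc] at hvp
      have hp2 : p ≠ 2 := by
        rintro rfl
        have : (2:ℕ).Coprime 2 := hc.coprime_dvd_right (Dvd.dvd.trans ⟨2 * d.natAbs, by ring⟩ h1)
        norm_num at this
      haveI := Fact.mk hpp
      have hpd : ∀ a : ℤ, 4 * a.natAbs ∣ N → jacobiSym a p ≠ 0 := by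
        intro a ha hcon
        rw [jacobiSym.eq_zero_iff_not_coprime] at hcon
        apply hcon
        rw [Int.gcd_comm]
        have := hc.coprime_dvd_right (Dvd.dvd.trans ⟨4, by ring⟩ ha : a.natAbs ∣ N)
        simpa [Int.gcd, Nat.Coprime] using this
      simp only [goodPrimes, Finset.mem_filter, Finset.mem_Ioc]
      refine ⟨⟨by omega, hpM⟩, hpp, hp2, ?_, ?_⟩
      · rcases jacobiSym.trichotomy d p with h | h | h
        · exact absurd h (hpd d h1)
        · exact h
        · rw [h] at hvp; norm_num at hvp
      · rcases jacobiSym.trichotomy d' p with h | h | h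
        · exact absurd h (hpd d' h2)
        · rw [h] at hvp; norm_num at hvp
        · exact h
    rw [hsub]
    refine (Finset.sum_le_sum (g := fun _ => 4 * Real.log M / Z) fun p hp => ?_).trans
      (Finset.sum_le_sum_of_subset_of_nonneg (fun p hp => (Finset.mem_filter.mp hp).2) fun _ _ _ => by positivity)
    simp only [Finset.mem_filter, Finset.mem_Ioc] at hp
    have hp0 : (0:ℝ) < p := by exact_mod_cast (by omega : 0 < p)
    rw [mul_div_assoc]
    refine mul_le_mul (hv0 p).2 ?_ (div_nonneg vonMangoldt_nonneg hp0.le) (by norm_num)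
    refine div_le_div₀ (by positivity) (vonMangoldt_le_log.trans
      (Real.log_le_log hp0 (by exact_mod_cast hp.1.1.2))) hZ0 (by exact_mod_cast hp.1.1.1.le)
  · rw [Chebyshev.psi_sub_theta_eq_sum_not_prime, Finset.mul_sum, Nat.floor_natCast]
    refine (Finset.sum_le_sum (g := fun n => 4 / Z * Λ n) fun p hp => ?_).trans
      (Finset.sum_le_sum_of_subset_of_nonneg (fun p hp => ?_) fun _ _ _ => mul_nonneg (by positivity) vonMangoldt_nonneg)
    · simp only [Finset.mem_filter, Finset.mem_Ioc] at hp
      have hp0 : (0:ℝ) < p := by exact_mod_cast (by omega : 0 < p)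
      calc v p * (Λ p / p) ≤ 4 * (Λ p / Z) := by
            refine mul_le_mul (hv0 p).2 ?_ (div_nonneg vonMangoldt_nonneg hp0.le) (by norm_num)
            exact div_le_div_of_nonneg_left vonMangoldt_nonneg hZ0 (by exact_mod_cast hp.1.1.le)
        _ = _ := by ring
    · simp only [Finset.mem_filter, Finset.mem_Ioc] at hp ⊢
      exact ⟨⟨by omega, hp.1.2⟩, hp.2⟩

/-- A weak lower bound for the number of good primes. In `goodPrimes_mertens` take `Z = M / A`, with
`A` so large that `log (M / Z)` exceeds the constant there. -/
lemma goodPrimes_card (d d' : ℤ) (hd : ¬ IsSquare d) (hd' : ¬ IsSquare d') (hdd : ¬ IsSquare (d * d')) :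
    ∃ M₀ : ℕ, ∀ M : ℕ, M₀ ≤ M → (M : ℝ) ^ (9/10 : ℝ) ≤ (goodPrimes d d' M).card := by
  obtain ⟨C, N, hC⟩ := goodPrimes_mertens d d' hd hd' hdd
  obtain ⟨C', hC'⟩ := Chebyshev.psi_sub_theta_le_mul_sqrt
  obtain ⟨A, hA⟩ := exists_nat_ge (Real.exp (C + 1))
  have hA0 : (0:ℝ) < A := lt_of_lt_of_le (Real.exp_pos _) hA
  have hA1 : 0 < A := by exact_mod_cast hA0
  have hlog : C + 1 ≤ Real.log A := (Real.le_log_iff_exp_le hA0).mpr hA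
  have t1 : ∀ᶠ x : ℝ in Filter.atTop, Real.log x ≤ (1 / (16 * A)) * x ^ (1/10 : ℝ) := by
    have := (isLittleO_log_rpow_atTop (r := 1/10) (by norm_num)).bound (show (0:ℝ) < 1 / (16 * A) by positivity)
    filter_upwards [this, Filter.eventually_ge_atTop 1] with x hx hx1
    rw [Real.norm_of_nonneg (Real.log_nonneg hx1), Real.norm_of_nonneg (by positivity)] at hx
    exact hx
  have t2 : ∀ᶠ x : ℝ in Filter.atTop, 16 * A * C' ≤ Real.sqrt x :=
    Real.tendsto_sqrt_atTop.eventually_ge_atTop _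
  have t3 := (t1.and (t2.and (Filter.eventually_ge_atTop 2)))
  obtain ⟨M₁, hM₁⟩ := Filter.eventually_atTop.mp (tendsto_natCast_atTop_atTop.eventually t3)
  refine ⟨max M₁ (A * (N + 1)), fun M hM => ?_⟩
  obtain ⟨hlM, hsM, hM2⟩ := hM₁ M (le_trans (le_max_left _ _) hM)
  have hM' : A * (N + 1) ≤ M := le_trans (le_max_right _ _) hM
  have hM0 : (0:ℝ) < M := by linarith
  set Z := M / A with hZ
  have hZN : N + 1 ≤ Z := (Nat.le_div_iff_mul_le hA1).mpr (by linarith)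
  have hZM : Z ≤ M := Nat.div_le_self _ _
  have hZ0 : (0:ℝ) < Z := by exact_mod_cast (by omega : 0 < Z)
  have hZA : (Z:ℝ) * A ≤ M := by exact_mod_cast Nat.div_mul_le_self M A
  have hZA2 : (M:ℝ) ≤ 2 * A * Z := by
    have : M < A * (Z + 1) := Nat.lt_mul_div_succ M hA1
    have : M ≤ 2 * A * Z := by nlinarith
    exact_mod_cast this
  have key := hC Z M (by omega) (by omega) hZM
  have k1 : Real.log Z + Real.log A ≤ Real.log M := by
    rw [← Real.log_mul hZ0.ne' hA0.ne']; exact Real.log_le_log (by positivity) hZA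
  have k2 : 4 / Z * (Chebyshev.psi M - Chebyshev.theta M) ≤ 1/2 := by
    have hs0 : 0 < Real.sqrt M := Real.sqrt_pos.mpr hM0
    calc _ ≤ 4 / Z * (C' * Real.sqrt M) := mul_le_mul_of_nonneg_left (hC' M) (by positivity)
      _ ≤ 1/2 := by
        rw [div_mul_eq_mul_div, div_le_iff₀ hZ0]
        have : 16 * A * C' * Real.sqrt M ≤ M := by
          calc _ ≤ Real.sqrt M * Real.sqrt M := mul_le_mul_of_nonneg_right hsM hs0.le
            _ = M := Real.mul_self_sqrt hM0.le
        have : A * (8 * C' * Real.sqrt M) ≤ A * Z := by nlinarith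
        have := le_of_mul_le_mul_left this hA0
        linarith
  have k3 : 1/2 ≤ (goodPrimes d d' M).card * (4 * Real.log M / Z) := by linarith
  have hlog0 : 0 < Real.log M := Real.log_pos (by linarith)
  have k4 : (Z:ℝ) / (8 * Real.log M) ≤ (goodPrimes d d' M).card := by
    rw [div_le_iff₀ (by positivity)]
    rw [mul_div_assoc', le_div_iff₀ hZ0] at k3
    linarith
  refine le_trans ?_ k4
  rw [le_div_iff₀ (by positivity)]
  have : (M:ℝ) = (M:ℝ) ^ (9/10:ℝ) * (M:ℝ) ^ (1/10:ℝ) := by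
    rw [← Real.rpow_add hM0]; norm_num
  have h9 : 0 < (M:ℝ) ^ (9/10:ℝ) := by positivity
  have : (M:ℝ) ^ (9/10:ℝ) * (8 * Real.log M) * (2 * A) ≤ M := by
    calc _ = (M:ℝ) ^ (9/10:ℝ) * (16 * A * Real.log M) := by ring
      _ ≤ (M:ℝ) ^ (9/10:ℝ) * (M:ℝ) ^ (1/10:ℝ) := by
          refine mul_le_mul_of_nonneg_left ?_ h9.le
          calc _ ≤ 16 * A * (1 / (16 * A) * (M:ℝ) ^ (1/10:ℝ)) := mul_le_mul_of_nonneg_left hlM (by positivity)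
            _ = _ := by field_simp
      _ = M := this.symm
  have h2A : (0:ℝ) < 2 * A := by positivity
  refine le_of_mul_le_mul_right (a := 2 * (A:ℝ)) ?_ h2A
  linarith

end GoodPrimes

/-! ### Counting ideals of bounded norm -/

section IdealCount
open NumberField Finset

variable {K : Type} [Field K] [NumberField K]

/-- At most four nonzero primes of a quartic field contain a given rational prime. -/
lemma card_primes_over_le (h4 : Module.finrank ℚ K = 4) (p : ℕ) (hp : p.Prime)
    (s : Finset (Ideal (𝓞 K))) (hs : ∀ P ∈ s, P.IsPrime ∧ (p : 𝓞 K) ∈ P) : s.card ≤ 4 := by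
  have hp0 : (p : 𝓞 K) ≠ 0 := by exact_mod_cast hp.ne_zero
  have hdvd : ∏ P ∈ s, P ∣ Ideal.span {(p : 𝓞 K)} := by
    apply Finset.prod_primes_dvd
    · intro P hP
      refine Ideal.prime_of_isPrime ?_ (hs P hP).1
      rintro rfl
      exact hp0 (by simpa using (hs _ hP).2)
    · intro P hP
      rw [Ideal.dvd_span_singleton]; exact (hs P hP).2
  have h1 := map_dvd (Ideal.absNorm (S := 𝓞 K)) hdvd
  rw [map_prod, Ideal.absNorm_span_natCast, RingOfIntegers.rank, h4] at h1
  have h2 : p ^ s.card ∣ ∏ P ∈ s, Ideal.absNorm P := by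
    rw [← Finset.prod_const]
    apply Finset.prod_dvd_prod_of_dvd
    intro P hP
    have hd : Ideal.absNorm P ∣ p ^ 4 := by
      have := Ideal.absNorm_dvd_absNorm_of_le
        ((Ideal.span_singleton_le_iff_mem _).mpr (hs P hP).2)
      rwa [Ideal.absNorm_span_natCast, RingOfIntegers.rank, h4] at this
    obtain ⟨k, -, hk⟩ := (Nat.dvd_prime_pow hp).mp hd
    rcases Nat.eq_zero_or_pos k with rfl | hk0
    · rw [pow_zero, Ideal.absNorm_eq_one_iff] at hk
      exact absurd hk (hs P hP).1.ne_top
    · rw [hk]; exact dvd_pow_self _ hk0.ne'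
  exact (Nat.pow_dvd_pow_iff_le_right hp.one_lt).mp (h2.trans h1)

/-- A labelling of the primes of a quartic field by four labels that separates any two primes
lying over the same rational prime. -/
lemma exists_label (h4 : Module.finrank ℚ K = 4) :
    ∃ lab : Ideal (𝓞 K) → Fin 4, ∀ P Q : Ideal (𝓞 K), P.IsPrime → Q.IsPrime →
      ∀ p : ℕ, p.Prime → (p : 𝓞 K) ∈ P → (p : 𝓞 K) ∈ Q → lab P = lab Q → P = Q := by
  classical
  have key : ∀ p : ℕ, ∃ f : Ideal (𝓞 K) → Fin 4, p.Prime → ∀ P Q : Ideal (𝓞 K),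
      P.IsPrime → Q.IsPrime → (p : 𝓞 K) ∈ P → (p : 𝓞 K) ∈ Q → f P = f Q → P = Q := by
    intro p
    by_cases hp : p.Prime
    swap
    · exact ⟨fun _ => 0, fun h => absurd h hp⟩
    set A : Set (Ideal (𝓞 K)) := {P | P.IsPrime ∧ (p : 𝓞 K) ∈ P}
    have hfin : A.Finite := by
      by_contra hinf
      obtain ⟨t, ht, hc⟩ := Set.Infinite.exists_subset_card_eq hinf 5
      have := card_primes_over_le h4 p hp t (fun P hP => ht hP)
      omega
    have hcard : hfin.toFinset.card ≤ 4 :=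
      card_primes_over_le h4 p hp _ (fun P hP => by simpa [A] using hP)
    have : Nonempty (hfin.toFinset ↪ Fin 4) := by
      apply Function.Embedding.nonempty_of_card_le
      simpa using hcard
    obtain ⟨e⟩ := this
    refine ⟨fun P => if h : P ∈ hfin.toFinset then e ⟨P, h⟩ else 0, fun _ P Q hP hQ hpP hpQ h => ?_⟩
    have h1 : P ∈ hfin.toFinset := by simp only [Set.Finite.mem_toFinset]; exact ⟨hP, hpP⟩
    have h2 : Q ∈ hfin.toFinset := by simp only [Set.Finite.mem_toFinset]; exact ⟨hQ, hpQ⟩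
    simp only [h1, h2, dif_pos] at h
    exact congrArg Subtype.val (e.injective h)
  choose f hf using key
  -- the residue characteristic of a prime
  have hchar : ∀ P : Ideal (𝓞 K), ∃ q : ℕ, ∀ p : ℕ, P.IsPrime → p.Prime → (p : 𝓞 K) ∈ P → p = q := by
    intro P
    by_cases h : ∃ q : ℕ, q.Prime ∧ (q : 𝓞 K) ∈ P
    · obtain ⟨q, hq, hqP⟩ := h
      refine ⟨q, fun p hPp hp hpP => ?_⟩
      by_contra hne
      have hco : IsCoprime (p : ℤ) (q : ℤ) :=
        Nat.isCoprime_iff_coprime.mpr ((Nat.coprime_primes hp hq).mpr hne)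
      obtain ⟨u, v, huv⟩ := hco
      apply hPp.ne_top
      rw [Ideal.eq_top_iff_one]
      have : (1 : 𝓞 K) = (u : 𝓞 K) * p + v * q := by exact_mod_cast (congrArg (Int.cast (R := 𝓞 K)) huv).symm
      rw [this]
      exact P.add_mem (P.mul_mem_left _ hpP) (P.mul_mem_left _ hqP)
    · push Not at h
      exact ⟨0, fun p _ hp hpP => absurd hpP (h p hp)⟩
  choose q hq using hchar
  refine ⟨fun P => f (q P) P, fun P Q hP hQ p hp hpP hpQ h => ?_⟩
  have e1 := hq P p hP hp hpP
  have e2 := hq Q p hQ hp hpQ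
  simp only [← e1, ← e2] at h
  exact hf p hp P Q hP hQ hpP hpQ h

/-- The norm of the part with label `i` of an ideal, the latter given by the multiset `m` of its
prime factors. -/
noncomputable def labNorm (lab : Ideal (𝓞 K) → Fin 4) (m : Multiset (Ideal (𝓞 K))) (i : Fin 4) : ℕ :=
  ((m.filter (fun P => lab P = i)).map Ideal.absNorm).prod

lemma labNorm_cons (lab : Ideal (𝓞 K) → Fin 4) (P : Ideal (𝓞 K)) (m : Multiset (Ideal (𝓞 K)))
    (i : Fin 4) :
    labNorm lab (P ::ₘ m) i = (if lab P = i then Ideal.absNorm P else 1) * labNorm lab m i := by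
  unfold labNorm
  by_cases h : lab P = i <;> simp [h]

lemma labNorm_prod (lab : Ideal (𝓞 K) → Fin 4) (m : Multiset (Ideal (𝓞 K))) :
    ∏ i, labNorm lab m i = (m.map Ideal.absNorm).prod := by
  induction m using Multiset.induction with
  | empty => simp [labNorm]
  | cons P m ih =>
    simp_rw [labNorm_cons]
    rw [Finset.prod_mul_distrib, ih, Multiset.map_cons, Multiset.prod_cons, Finset.prod_ite_eq,
      if_pos (Finset.mem_univ _)]

lemma labNorm_pos (lab : Ideal (𝓞 K) → Fin 4) (m : Multiset (Ideal (𝓞 K))) (i : Fin 4)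
    (hm : ∀ P ∈ m, P ≠ ⊥) : labNorm lab m i ≠ 0 := by
  unfold labNorm
  apply Multiset.prod_ne_zero
  intro hn
  obtain ⟨P, hP, hP0⟩ := Multiset.mem_map.mp hn
  revert hP0
  rw [Ideal.absNorm_eq_zero_iff]
  exact hm P (Multiset.mem_filter.mp hP).1

lemma labNorm_factorization [DecidableEq (Ideal (𝓞 K))] (lab : Ideal (𝓞 K) → Fin 4)
    (hlab : ∀ P Q : Ideal (𝓞 K), P.IsPrime → Q.IsPrime →
      ∀ p : ℕ, p.Prime → (p : 𝓞 K) ∈ P → (p : 𝓞 K) ∈ Q → lab P = lab Q → P = Q)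
    (P : Ideal (𝓞 K)) (hP : P.IsPrime) (p n : ℕ) (hp : p.Prime) (hpP : (p : 𝓞 K) ∈ P)
    (hN : Ideal.absNorm P = p ^ n) (m : Multiset (Ideal (𝓞 K)))
    (hm : ∀ Q ∈ m, Q.IsPrime ∧ Q ≠ ⊥) :
    (labNorm lab m (lab P)).factorization p = n * m.count P := by
  induction m using Multiset.induction with
  | empty => simp [labNorm]
  | cons Q m ih =>
    have hm' : ∀ Q ∈ m, Q.IsPrime ∧ Q ≠ ⊥ := fun R hR => hm R (Multiset.mem_cons_of_mem hR)
    have hQ := hm Q (Multiset.mem_cons_self _ _)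
    have h0 := labNorm_pos lab m (lab P) (fun R hR => (hm' R hR).2)
    rw [labNorm_cons, Multiset.count_cons]
    by_cases hl : lab Q = lab P
    · rw [if_pos hl, Nat.factorization_mul (by rw [Ne, Ideal.absNorm_eq_zero_iff]; exact hQ.2) h0,
        Finsupp.add_apply, ih hm']
      by_cases hPQ : P = Q
      · subst hPQ
        rw [if_pos rfl, hN]
        simp [hp.factorization]
        ring
      · rw [if_neg hPQ]
        have : ¬ p ∣ Ideal.absNorm Q := by
          intro hd
          have := hQ.1.isMaximal hQ.2
          obtain ⟨r, k, -, hrQ, hr, hk⟩ := Ideal.exists_prime_and_absNorm_eq_pow Q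
          rw [hk] at hd
          have := (Nat.prime_dvd_prime_iff_eq hp hr).mp (hp.dvd_of_dvd_pow hd)
          subst this
          exact hPQ (hlab P Q hP hQ.1 p hp hpP hrQ hl.symm)
        rw [Nat.factorization_eq_zero_of_not_dvd this]
        ring
    · rw [if_neg hl, one_mul, ih hm', if_neg (by rintro rfl; exact hl rfl), add_zero]

/-- A nonzero ideal of a quartic field is determined by the norms of its four labelled parts. -/
lemma labNorm_injective (lab : Ideal (𝓞 K) → Fin 4)
    (hlab : ∀ P Q : Ideal (𝓞 K), P.IsPrime → Q.IsPrime →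
      ∀ p : ℕ, p.Prime → (p : 𝓞 K) ∈ P → (p : 𝓞 K) ∈ Q → lab P = lab Q → P = Q)
    (I J : Ideal (𝓞 K)) (hI : I ≠ ⊥) (hJ : J ≠ ⊥)
    (h : labNorm lab (UniqueFactorizationMonoid.normalizedFactors I) =
      labNorm lab (UniqueFactorizationMonoid.normalizedFactors J)) : I = J := by
  classical
  have hfac : ∀ I : Ideal (𝓞 K), I ≠ ⊥ →
      ∀ Q ∈ UniqueFactorizationMonoid.normalizedFactors I, Q.IsPrime ∧ Q ≠ ⊥ := by
    intro I hI Q hQ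
    have := UniqueFactorizationMonoid.prime_of_normalized_factor Q hQ
    exact ⟨Ideal.isPrime_of_prime this, this.ne_zero⟩
  have : UniqueFactorizationMonoid.normalizedFactors I =
      UniqueFactorizationMonoid.normalizedFactors J := by
    ext P
    by_cases hP : P.IsPrime ∧ P ≠ ⊥
    · have := hP.1.isMaximal hP.2
      obtain ⟨p, n, hn, hpP, hp, hN⟩ := Ideal.exists_prime_and_absNorm_eq_pow P
      have h1 := labNorm_factorization lab hlab P hP.1 p n hp hpP hN _ (hfac I hI)
      have h2 := labNorm_factorization lab hlab P hP.1 p n hp hpP hN _ (hfac J hJ)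
      rw [h, h2] at h1
      exact (Nat.eq_of_mul_eq_mul_left hn h1).symm
    · rw [Multiset.count_eq_zero_of_notMem (fun hm => hP (hfac I hI P hm)),
        Multiset.count_eq_zero_of_notMem (fun hm => hP (hfac J hJ P hm))]
  rw [← Ideal.prod_normalizedFactors_eq_self hI, this, Ideal.prod_normalizedFactors_eq_self hJ]

/-- Uniform bound for the number of ideals of bounded norm in a quartic field, by comparison of
the Dedekind zeta function with `ζ ^ 4`. -/
lemma ideal_count (ε : ℝ) (hε : 0 < ε) : ∃ C : ℝ, 0 < C ∧ ∀ (K : Type) [Field K] [NumberField K],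
    Module.finrank ℚ K = 4 → ∀ x : ℝ, 1 ≤ x → ∀ S : Finset (Ideal (𝓞 K)),
      (∀ I ∈ S, I ≠ ⊥ ∧ (Ideal.absNorm I : ℝ) ≤ x) → (S.card : ℝ) ≤ C * x ^ (1 + ε) := by
  classical
  have hsum : Summable (fun n : ℕ => ((n : ℝ) ^ (1 + ε))⁻¹) :=
    Real.summable_nat_rpow_inv.mpr (by linarith)
  refine ⟨(∑' n : ℕ, ((n : ℝ) ^ (1 + ε))⁻¹) ^ 4, ?_, ?_⟩
  · apply pow_pos
    refine hsum.tsum_pos (fun n => by positivity) 1 (by simp)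
  intro K _ _ h4 x hx S hS
  obtain ⟨lab, hlab⟩ := exists_label h4
  set F : Ideal (𝓞 K) → (Fin 4 → ℕ) := fun I =>
    labNorm lab (UniqueFactorizationMonoid.normalizedFactors I)
  have hFprod : ∀ I, I ≠ ⊥ → ∏ i, F I i = Ideal.absNorm I := by
    intro I hI
    rw [labNorm_prod, ← map_multiset_prod, Ideal.prod_normalizedFactors_eq_self hI]
  have hF0 : ∀ I, I ≠ ⊥ → ∀ i, F I i ≠ 0 := by
    intro I hI i hi
    have := hFprod I hI
    rw [Finset.prod_eq_zero (Finset.mem_univ i) hi] at this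
    exact hI (Ideal.absNorm_eq_zero_iff.mp this.symm)
  have hinj : Set.InjOn F S := fun I hI J hJ h =>
    labNorm_injective lab hlab I J (hS I hI).1 (hS J hJ).1 h
  set N := ⌊x⌋₊
  have hle : ∀ I ∈ S, F I ∈ Fintype.piFinset (fun _ : Fin 4 => Finset.range (N + 1)) := by
    intro I hI
    rw [Fintype.mem_piFinset]
    intro i
    rw [Finset.mem_range, Nat.lt_succ_iff]
    have h1 : F I i ∣ Ideal.absNorm I := by
      rw [← hFprod I (hS I hI).1]; exact Finset.dvd_prod_of_mem _ (Finset.mem_univ i)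
    have h0 : 0 < Ideal.absNorm I := Nat.pos_of_ne_zero (fun h =>
      (hS I hI).1 (Ideal.absNorm_eq_zero_iff.mp h))
    exact (Nat.le_of_dvd h0 h1).trans (Nat.le_floor (hS I hI).2)
  have step : (S.card : ℝ) ≤ ∑ I ∈ S, x ^ (1 + ε) * ∏ i, (((F I i : ℕ) : ℝ) ^ (1 + ε))⁻¹ := by
    rw [← nsmul_one, ← Finset.sum_const]
    apply Finset.sum_le_sum
    intro I hI
    rw [Finset.prod_inv_distrib, Real.finsetProd_rpow _ _ (fun i _ => by positivity)]
    have : (∏ i, ((F I i : ℕ) : ℝ)) = Ideal.absNorm I := by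
      exact_mod_cast hFprod I (hS I hI).1
    rw [this]
    have h0 : (0 : ℝ) < Ideal.absNorm I := by
      exact_mod_cast Nat.pos_of_ne_zero (fun h =>
      (hS I hI).1 (Ideal.absNorm_eq_zero_iff.mp h))
    rw [← div_eq_mul_inv, one_le_div (by positivity)]
    exact Real.rpow_le_rpow h0.le (hS I hI).2 (by linarith)
  refine step.trans ?_
  rw [← Finset.mul_sum, mul_comm]
  gcongr
  calc ∑ I ∈ S, ∏ i, (((F I i : ℕ) : ℝ) ^ (1 + ε))⁻¹
      = ∑ t ∈ S.image F, ∏ i, (((t i : ℕ) : ℝ) ^ (1 + ε))⁻¹ := by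
        rw [Finset.sum_image hinj]
    _ ≤ ∑ t ∈ Fintype.piFinset (fun _ : Fin 4 => Finset.range (N + 1)),
          ∏ i, (((t i : ℕ) : ℝ) ^ (1 + ε))⁻¹ := by
        apply Finset.sum_le_sum_of_subset_of_nonneg
        · intro t ht
          obtain ⟨I, hI, rfl⟩ := Finset.mem_image.mp ht
          exact hle I hI
        · intros; positivity
    _ = (∑ n ∈ Finset.range (N + 1), ((n : ℝ) ^ (1 + ε))⁻¹) ^ 4 := by
        rw [← Finset.prod_univ_sum (fun _ : Fin 4 => Finset.range (N + 1))
          (fun _ n => ((n : ℝ) ^ (1 + ε))⁻¹)]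
        simp
    _ ≤ _ := by
        apply pow_le_pow_left₀ (Finset.sum_nonneg (fun _ _ => by positivity))
        exact hsum.sum_le_tsum _ (fun _ _ => by positivity)

end IdealCount

/-! ### Minkowski's theorem in quartic fields -/

section Minkowski
open NumberField NumberField.InfinitePlace NumberField.mixedEmbedding MeasureTheory
open scoped nonZeroDivisors NNReal ENNReal

variable {K : Type} [Field K] [NumberField K]

/-- Mathlib's Minkowski bound is `2 ^ 4` times the covolume; the factor `2 ^ (-r₂)` in the covolume is
dropped. -/
lemma minkowskiBound_le (h4 : Module.finrank ℚ K = 4) (I : (FractionalIdeal (𝓞 K)⁰ K)ˣ) :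
    minkowskiBound K I ≤
      ENNReal.ofReal (16 * (FractionalIdeal.absNorm I.1 : ℚ) * √|(discr K : ℝ)|) := by
  classical
  rw [minkowskiBound, volume_fundamentalDomain_fractionalIdealLatticeBasis,
    mixedEmbedding.finrank, h4, volume_fundamentalDomain_latticeBasis,
    ENNReal.ofReal_mul (by have := FractionalIdeal.absNorm_nonneg I.1; positivity),
    ENNReal.ofReal_mul (by norm_num)]
  have h1 : ENNReal.ofReal 16 = 2 ^ 4 := by
    norm_num
  have h2 : ENNReal.ofReal √|(discr K : ℝ)| = (NNReal.sqrt ‖discr K‖₊ : ℝ≥0∞) := by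
    have : |(discr K : ℝ)| = ((‖discr K‖₊ : ℝ≥0) : ℝ) := by simp [Int.norm_eq_abs]
    rw [this, ← Real.coe_sqrt, ENNReal.ofReal_coe_nnreal]
  rw [h1, h2]
  have h3 : (2 : ℝ≥0∞)⁻¹ ^ nrComplexPlaces K ≤ 1 := pow_le_one₀ (by positivity) (by simp)
  have h3' := mul_le_mul_left h3 (NNReal.sqrt ‖discr K‖₊ : ℝ≥0∞)
  calc _ = 2 ^ 4 * ENNReal.ofReal (FractionalIdeal.absNorm I.1 : ℚ) *
          ((2 : ℝ≥0∞)⁻¹ ^ nrComplexPlaces K * (NNReal.sqrt ‖discr K‖₊ : ℝ≥0∞)) := by ring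
    _ ≤ 2 ^ 4 * ENNReal.ofReal (FractionalIdeal.absNorm I.1 : ℚ) *
          (1 * (NNReal.sqrt ‖discr K‖₊ : ℝ≥0∞)) := by gcongr
    _ = _ := by rw [one_mul]

/-- Minkowski's convex body theorem for an integral ideal of a quartic field. -/
lemma exists_small (h4 : Module.finrank ℚ K = 4) (J : Ideal (𝓞 K)) (hJ : J ≠ ⊥)
    (f : InfinitePlace K → ℝ) (hf : ∀ w, 0 ≤ f w)
    (h : 16 * (Ideal.absNorm J : ℝ) * √|(discr K : ℝ)| < ∏ w, f w ^ mult w) :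
    ∃ β ∈ J, β ≠ 0 ∧ ∀ w : InfinitePlace K, w (β : K) < f w := by
  have hJ' : (J : FractionalIdeal (𝓞 K)⁰ K) ≠ 0 := FractionalIdeal.coeIdeal_ne_zero.mpr hJ
  obtain ⟨a, ha, ha0, haf⟩ := exists_ne_zero_mem_ideal_lt (K := K)
    (f := fun w => (f w).toNNReal) (Units.mk0 _ hJ') (by
      refine (minkowskiBound_le h4 _).trans_lt ?_
      rw [convexBodyLT_volume, Units.val_mk0, FractionalIdeal.coeIdeal_absNorm]
      have e : (∏ w, ((f w).toNNReal : ℝ≥0∞) ^ mult w) = ENNReal.ofReal (∏ w, f w ^ mult w) := by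
        rw [ENNReal.ofReal_prod_of_nonneg (fun w _ => by have := hf w; positivity)]
        refine Finset.prod_congr rfl fun w _ => ?_
        rw [ENNReal.ofReal_pow (hf w)]; rfl
      have e' : ((∏ w, (f w).toNNReal ^ mult w : ℝ≥0) : ℝ≥0∞) =
          ENNReal.ofReal (∏ w, f w ^ mult w) := by rw [← e]; push_cast; rfl
      calc _ < ENNReal.ofReal (∏ w, f w ^ mult w) := by
            rw [ENNReal.ofReal_lt_ofReal_iff_of_nonneg (by positivity)]
            exact_mod_cast h
        _ = 1 * ENNReal.ofReal (∏ w, f w ^ mult w) := (one_mul _).symm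
        _ ≤ _ := by
          rw [← e']
          gcongr
          exact_mod_cast one_le_convexBodyLTFactor K)
  rw [Units.val_mk0, FractionalIdeal.mem_coeIdeal] at ha
  obtain ⟨β, hβ, rfl⟩ := ha
  refine ⟨β, hβ, fun h => ha0 (by simp [h]), fun w => ?_⟩
  have := haf w
  rwa [Real.coe_toNNReal _ (hf w)] at this

/-- A primitive integral element whose conjugates are `O(√D)`. -/
lemma exists_primitive_small (h4 : Module.finrank ℚ K = 4) :
    ∃ a : 𝓞 K, IntermediateField.adjoin ℚ {(a : K)} = ⊤ ∧
      ∀ w : InfinitePlace K, w (a : K) ≤ 20 * √|(discr K : ℝ)| := by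
  have hD : (1 : ℝ) ≤ √|(discr K : ℝ)| := by
    rw [Real.one_le_sqrt]
    exact_mod_cast Int.one_le_abs (discr_ne_zero K)
  have hB : minkowskiBound K ↑1 < ((17 * √|(discr K : ℝ)|).toNNReal : ℝ≥0∞) := by
    refine (minkowskiBound_le h4 _).trans_lt ?_
    change _ < ENNReal.ofReal _
    rw [ENNReal.ofReal_lt_ofReal_iff (by positivity)]
    simp only [Units.val_one, FractionalIdeal.absNorm_one, Rat.cast_one]
    linarith
  have hBc : (((17 * √|(discr K : ℝ)|).toNNReal : ℝ≥0) : ℝ) = 17 * √|(discr K : ℝ)| :=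
    Real.coe_toNNReal _ (by positivity)
  have w₀ : InfinitePlace K := Classical.arbitrary _
  rcases isReal_or_isComplex w₀ with hw | hw
  · obtain ⟨a, ha, hw⟩ := exists_primitive_element_lt_of_isReal K hw
      (B := (17 * √|(discr K : ℝ)|).toNNReal) (hB.trans_le (by
        conv_lhs => rw [← one_mul ((17 * √|(discr K : ℝ)|).toNNReal : ℝ≥0∞)]
        gcongr
        exact_mod_cast one_le_convexBodyLTFactor K))
    refine ⟨a, ha, fun w => (hw w).le.trans ?_⟩
    push_cast
    rw [hBc]
    exact max_le (by linarith) (by linarith)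
  · obtain ⟨a, ha, hw⟩ := exists_primitive_element_lt_of_isComplex K hw
      (B := (17 * √|(discr K : ℝ)|).toNNReal) (hB.trans_le (by
        conv_lhs => rw [← one_mul ((17 * √|(discr K : ℝ)|).toNNReal : ℝ≥0∞)]
        gcongr
        exact_mod_cast one_le_convexBodyLT'Factor K))
    refine ⟨a, ha, fun w => (hw w).le.trans ?_⟩
    rw [hBc]
    apply Real.sqrt_le_iff.mpr
    constructor <;> nlinarith

end Minkowski

/-! ### Short elements attached to torsion classes -/

section EV
open NumberField NumberField.InfinitePlace
open scoped nonZeroDivisors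

variable {K : Type} [Field K] [NumberField K]

lemma prod_places (x : 𝓞 K) :
    ∏ w : InfinitePlace K, w (x : K) ^ mult w = Ideal.absNorm (Ideal.span {x}) := by
  rw [InfinitePlace.prod_eq_abs_norm, Ideal.absNorm_span_singleton, ← Algebra.coe_norm_int]
  rw [Nat.cast_natAbs]
  push_cast
  simp

lemma sum_log_places (x : 𝓞 K) (hx : x ≠ 0) :
    ∑ w : InfinitePlace K, (mult w : ℝ) * Real.log (w (x : K)) =
      Real.log (Ideal.absNorm (Ideal.span {x})) := by
  rw [← prod_places, Real.log_prod]
  · simp [Real.log_pow]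
  · intro w _
    have : w (x : K) ≠ 0 := by simpa using hx
    positivity

/-- An `ℓ`-torsion class is the class of an integral ideal `I` with `I ^ ℓ = (κ)`. -/
lemma exists_rep (ℓ : ℕ) (c : ClassGroup (𝓞 K)) (hc : c ^ ℓ = 1) :
    ∃ (I : (Ideal (𝓞 K))⁰) (κ : 𝓞 K), κ ≠ 0 ∧ ClassGroup.mk0 I = c ∧
      (I : Ideal (𝓞 K)) ^ ℓ = Ideal.span {κ} := by
  obtain ⟨I, rfl⟩ := ClassGroup.mk0_surjective c
  rw [← map_pow, ClassGroup.mk0_eq_one_iff] at hc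
  obtain ⟨κ, hκ⟩ := hc.principal
  refine ⟨I, κ, ?_, rfl, ?_⟩
  · rintro rfl
    have := nonZeroDivisors.coe_ne_zero (I ^ ℓ)
    apply this
    rw [hκ]; simp
  · rw [← SubmonoidClass.coe_pow, hκ]

/-- Minkowski's theorem in the ideal `I * B`, where `I ^ ℓ = (κ)`: there is an element `β` whose
absolute values, normalised by those of `κ ^ (1 / ℓ)`, lie in `[A⁻⁴, A]`. -/
lemma exists_beta (h4 : Module.finrank ℚ K = 4) (ℓ : ℕ) (hℓ : 1 ≤ ℓ) (I B : Ideal (𝓞 K)) (κ : 𝓞 K)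
    (hI : I ≠ ⊥) (hB : B ≠ ⊥) (hκ : κ ≠ 0) (hIκ : I ^ ℓ = Ideal.span {κ})
    (A : ℝ) (hA : 1 ≤ A)
    (hA4 : 16 * (Ideal.absNorm B : ℝ) * √|(discr K : ℝ)| < A ^ 4) :
    ∃ (β : 𝓞 K) (a : Ideal (𝓞 K)), β ≠ 0 ∧ a ≠ ⊥ ∧ Ideal.span {β} = I * B * a ∧
      (Ideal.absNorm B : ℝ) * Ideal.absNorm a ≤ A ^ 4 ∧
      ∀ w : InfinitePlace K,
        Real.log (w (β : K)) - Real.log (w (κ : K)) / ℓ ≤ Real.log A ∧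
        -(4 * Real.log A) ≤ Real.log (w (β : K)) - Real.log (w (κ : K)) / ℓ := by
  have hℓ0 : (0 : ℝ) < ℓ := by exact_mod_cast hℓ
  have hA0 : 0 < A := by linarith
  have hpos : ∀ J : Ideal (𝓞 K), J ≠ ⊥ → (0 : ℝ) < Ideal.absNorm J := fun J hJ => by
    exact_mod_cast Nat.pos_of_ne_zero (fun h => hJ (Ideal.absNorm_eq_zero_iff.mp h))
  have hκw : ∀ w : InfinitePlace K, 0 < w (κ : K) := fun w => by
    rw [InfinitePlace.pos_iff]; simpa using hκ
  have hNκ : (Ideal.absNorm (Ideal.span {κ}) : ℝ) = (Ideal.absNorm I : ℝ) ^ ℓ := by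
    rw [← hIκ, map_pow]; push_cast; rfl
  have hprod : ∏ w : InfinitePlace K, (A * (w (κ : K)) ^ (1 / ℓ : ℝ)) ^ mult w =
      A ^ 4 * Ideal.absNorm I := by
    simp_rw [mul_pow]
    rw [Finset.prod_mul_distrib, Finset.prod_pow_eq_pow_sum, sum_mult_eq, h4]
    congr 1
    have : ∀ w : InfinitePlace K, ((w (κ : K)) ^ (1 / ℓ : ℝ)) ^ mult w =
        ((w (κ : K)) ^ mult w) ^ (1 / ℓ : ℝ) := by
      intro w
      rw [← Real.rpow_natCast, ← Real.rpow_mul (hκw w).le, mul_comm, Real.rpow_mul (hκw w).le,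
        Real.rpow_natCast]
    simp_rw [this]
    rw [Real.finsetProd_rpow _ _ (fun w _ => by have := hκw w; positivity), prod_places, hNκ,
      ← Real.rpow_natCast, ← Real.rpow_mul (by positivity), mul_one_div_cancel hℓ0.ne',
      Real.rpow_one]
  obtain ⟨β, hβ, hβ0, hβw⟩ := exists_small h4 (I * B) (mul_ne_zero hI hB)
    (fun w => A * (w (κ : K)) ^ (1 / ℓ : ℝ)) (fun w => by have := hκw w; positivity) (by
      rw [hprod, map_mul]
      push_cast
      have := hpos I hI
      nlinarith)
  obtain ⟨a, ha⟩ := Ideal.dvd_span_singleton.mpr hβ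
  have hβs : Ideal.span {β} ≠ ⊥ := by simpa using hβ0
  have ha0 : a ≠ ⊥ := by
    rintro rfl
    rw [Ideal.mul_bot] at ha
    exact hβs ha
  have hβwpos : ∀ w : InfinitePlace K, 0 < w (β : K) := fun w => by
    rw [InfinitePlace.pos_iff]; simpa using hβ0
  have hNβ : (Ideal.absNorm (Ideal.span {β}) : ℝ) =
      Ideal.absNorm I * Ideal.absNorm B * Ideal.absNorm a := by
    rw [ha]; push_cast [map_mul]; ring
  have hup : ∀ w : InfinitePlace K,
      Real.log (w (β : K)) - Real.log (w (κ : K)) / ℓ ≤ Real.log A := by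
    intro w
    have h1 := Real.log_le_log (hβwpos w) (hβw w).le
    rw [Real.log_mul hA0.ne' (by have := hκw w; positivity), Real.log_rpow (hκw w)] at h1
    have : 1 / (ℓ : ℝ) * Real.log (w (κ : K)) = Real.log (w (κ : K)) / ℓ := by ring
    linarith
  have hA0' : 0 ≤ Real.log A := Real.log_nonneg hA
  refine ⟨β, a, hβ0, ha0, ha, ?_, fun w => ⟨hup w, ?_⟩⟩
  · have h1 : ∏ w : InfinitePlace K, w (β : K) ^ mult w ≤ A ^ 4 * Ideal.absNorm I := by
      rw [← hprod]
      gcongr with w _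
      exact (hβw w).le
    rw [prod_places, hNβ] at h1
    have := hpos I hI
    nlinarith
  · have hsum : 0 ≤ ∑ v : InfinitePlace K,
        (mult v : ℝ) * (Real.log (v (β : K)) - Real.log (v (κ : K)) / ℓ) := by
      have e : ∀ v : InfinitePlace K,
        (mult v : ℝ) * (Real.log (v (β : K)) - Real.log (v (κ : K)) / ℓ) =
        (mult v : ℝ) * Real.log (v (β : K)) - (mult v : ℝ) * Real.log (v (κ : K)) / ℓ := by
        intro v; ring
      simp_rw [e]
      rw [Finset.sum_sub_distrib, ← Finset.sum_div, sum_log_places _ hβ0, sum_log_places _ hκ,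
        hNκ, hNβ, Real.log_pow, mul_assoc, Real.log_mul (hpos I hI).ne'
        (mul_pos (hpos B hB) (hpos a ha0)).ne', mul_div_cancel_left₀ _ hℓ0.ne']
      have : 1 ≤ (Ideal.absNorm B : ℝ) * Ideal.absNorm a := by
        have h1 : (1 : ℝ) ≤ Ideal.absNorm B := by exact_mod_cast (by exact_mod_cast hpos B hB)
        have h2 : (1 : ℝ) ≤ Ideal.absNorm a := by exact_mod_cast (by exact_mod_cast hpos a ha0)
        nlinarith
      have := Real.log_nonneg this
      linarith
    by_contra hlt
    push Not at hlt
    classical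
    have hle : ∑ v : InfinitePlace K,
        (mult v : ℝ) * (Real.log (v (β : K)) - Real.log (v (κ : K)) / ℓ) ≤
        (Real.log (w (β : K)) - Real.log (w (κ : K)) / ℓ) +
          ∑ v : InfinitePlace K, (mult v : ℝ) * Real.log A := by
      rw [← Finset.add_sum_erase _ _ (Finset.mem_univ w)]
      apply add_le_add
      · have : (1 : ℝ) ≤ mult w := by exact_mod_cast (mult_pos : 0 < mult w)
        nlinarith
      · refine (Finset.sum_le_sum fun v _ => mul_le_mul_of_nonneg_left (hup v) (by positivity)).trans
          (Finset.sum_le_univ_sum_of_nonneg fun v => by positivity)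
    rw [← Finset.sum_mul, ← Nat.cast_sum, sum_mult_eq, h4] at hle
    push_cast at hle
    linarith

end EV

/-! ### The Ellenberg–Venkatesh pigeonhole -/

section EV2
open NumberField NumberField.InfinitePlace
open scoped nonZeroDivisors

lemma card_places_le {K : Type} [Field K] [NumberField K] (h4 : Module.finrank ℚ K = 4) :
    Fintype.card (InfinitePlace K) ≤ 4 := by
  rw [← h4, ← sum_mult_eq, Fintype.card_eq_sum_ones]
  exact Finset.sum_le_sum fun w _ => mult_pos

set_option maxHeartbeats 1000000 in
/-- Pigeonhole argument of Ellenberg and Venkatesh: many nonzero ideals `B i` of small norm, such that no quotient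
`B i ^ ℓ / B j ^ ℓ` has a generator all of whose absolute values are at most `(D ^ η) ^ ℓ`,
force the `ℓ`-torsion of the class group to be small. -/
lemma torsion_mul_card_le (η ε : ℝ) (hη : 0 < η) (hε : 0 < ε) : ∃ C : ℝ, 0 < C ∧
    ∀ (K : Type) [Field K] [NumberField K], Module.finrank ℚ K = 4 → ∀ ℓ : ℕ, 1 ≤ ℓ →
    ∀ (ι : Type) [Fintype ι] (B : ι → Ideal (𝓞 K)), (∀ i, B i ≠ ⊥) →
      (∀ i, (Ideal.absNorm (B i) : ℝ) ≤ |(discr K : ℝ)| ^ 4) →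
      (∀ i j, i ≠ j → ∀ x y : 𝓞 K, x ≠ 0 → y ≠ 0 →
        Ideal.span {x} * B j ^ ℓ = Ideal.span {y} * B i ^ ℓ →
        ¬ ∀ w : InfinitePlace K, w (x : K) ≤ (|(discr K : ℝ)| ^ η) ^ ℓ * w (y : K)) →
      (Nat.card {c : ClassGroup (𝓞 K) // c ^ ℓ = 1} : ℝ) * Fintype.card ι ≤
        C * |(discr K : ℝ)| ^ (1 / 2 + ε) := by
  classical
  obtain ⟨C₁, hC₁, hcount⟩ := ideal_count ε hε
  -- the logarithms below lie within `12 * log D` of `0`, hence in at most `2 * N + 1` intervals of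
  -- length `η * log D`
  set N : ℕ := ⌈12 / η⌉₊
  refine ⟨(2 * N + 1) ^ 4 * (C₁ * 17 ^ (1 + ε)), by positivity, ?_⟩
  intro K _ _ h4 ℓ hℓ ι _ B hB0 hBN hsep
  set D : ℝ := |(discr K : ℝ)| with hD
  have hD3 : 3 ≤ D := by
    have : 2 < |discr K| := abs_discr_gt_two (by omega)
    have : 3 ≤ |discr K| := this
    rw [hD]; exact_mod_cast this
  have hlogD : 0 < Real.log D := Real.log_pos (by linarith)
  have hsD1 : 1 ≤ √D := by rw [Real.one_le_sqrt]; linarith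
  have hℓ0 : (0 : ℝ) < ℓ := by exact_mod_cast hℓ
  have hcancel : ∀ p q r s : ℝ,
      (ℓ : ℝ) * (p - q / ℓ - (r - s / ℓ)) = ℓ * p - q - (ℓ * r - s) := by
    intro p q r s; field_simp
  have hBpos : ∀ i, (1 : ℝ) ≤ Ideal.absNorm (B i) := fun i => by
    exact_mod_cast Nat.pos_of_ne_zero (fun h => hB0 i (Ideal.absNorm_eq_zero_iff.mp h))
  choose I κ hκ0 hIc hIκ using fun c : {c : ClassGroup (𝓞 K) // c ^ ℓ = 1} => exists_rep ℓ c.1 c.2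
  have hI0 : ∀ c, (I c : Ideal (𝓞 K)) ≠ ⊥ := fun c => nonZeroDivisors.coe_ne_zero (I c)
  set A : ι → ℝ := fun i => (17 * √D * Ideal.absNorm (B i)) ^ (1 / 4 : ℝ)
  have hA4 : ∀ i, A i ^ 4 = 17 * √D * Ideal.absNorm (B i) := by
    intro i
    rw [← Real.rpow_natCast, ← Real.rpow_mul (by positivity)]
    norm_num
  have hA4' : ∀ i, 17 ≤ A i ^ 4 := by
    intro i; rw [hA4]
    nlinarith [hBpos i, mul_nonneg (sub_nonneg.mpr hsD1) (sub_nonneg.mpr (hBpos i))]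
  have hA1 : ∀ i, 1 ≤ A i := by
    intro i
    by_contra hlt
    push Not at hlt
    have := pow_le_one₀ (n := 4) (by positivity : 0 ≤ A i) hlt.le
    linarith [hA4' i]
  have hlogA : ∀ i, Real.log (A i) ≤ 3 * Real.log D := by
    intro i
    have h1 : A i ^ 4 ≤ D ^ 12 := by
      rw [hA4]
      have h2 : √D ≤ D := by
        rw [Real.sqrt_le_left (by linarith)]; nlinarith
      have h3 : (17 : ℝ) ≤ D ^ 3 := by
        calc (17 : ℝ) ≤ 3 ^ 3 := by norm_num
          _ ≤ D ^ 3 := by gcongr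
      calc 17 * √D * Ideal.absNorm (B i) ≤ D ^ 3 * D * D ^ 4 := by
            gcongr
            exact hBN i
        _ = D ^ 8 := by ring
        _ ≤ D ^ 12 := pow_le_pow_right₀ (by linarith) (by norm_num)
    have h2 := Real.log_le_log (by have := hA4' i; linarith) h1
    rw [Real.log_pow, Real.log_pow] at h2
    push_cast at h2
    linarith
  have hex := fun (c : {c : ClassGroup (𝓞 K) // c ^ ℓ = 1}) (i : ι) =>
    exists_beta h4 ℓ hℓ (I c) (B i) (κ c) (hI0 c) (hB0 i) (hκ0 c) (hIκ c) (A i) (hA1 i) (by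
      rw [hA4]; nlinarith [hBpos i])
  choose β a hβ0 ha0 hβa haN hLw using hex
  set h : ℝ := η * Real.log D with hh
  have hh0 : 0 < h := by positivity
  set L : {c : ClassGroup (𝓞 K) // c ^ ℓ = 1} → ι → InfinitePlace K → ℝ := fun c i w =>
    Real.log (w (β c i : K)) - Real.log (w (κ c : K)) / ℓ with hL
  set S : Finset (Ideal (𝓞 K)) :=
    (Ideal.finite_setOfPred_absNorm_le (S := 𝓞 K) ⌊17 * √D⌋₊).toFinset.filter (· ≠ ⊥) with hS
  have hScard : (S.card : ℝ) ≤ C₁ * (17 * √D) ^ (1 + ε) := by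
    apply hcount K h4 _ (by linarith)
    intro J hJ
    rw [hS, Finset.mem_filter, Set.Finite.mem_toFinset] at hJ
    refine ⟨hJ.2, ?_⟩
    have : Ideal.absNorm J ≤ ⌊17 * √D⌋₊ := hJ.1
    exact (Nat.le_floor_iff (by positivity)).mp this
  set T : Finset (InfinitePlace K → ℤ) := Fintype.piFinset fun _ => Finset.Icc (-(N : ℤ)) N with hT
  have hTcard : (T.card : ℝ) ≤ (2 * N + 1) ^ 4 := by
    rw [hT, Fintype.card_piFinset]
    simp only [Int.card_Icc, Finset.prod_const, Finset.card_univ]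
    have e : ((N : ℤ) + 1 - -(N : ℤ)).toNat = 2 * N + 1 := by omega
    rw [e]
    have : (2 * N + 1) ^ Fintype.card (InfinitePlace K) ≤ (2 * N + 1) ^ 4 :=
      Nat.pow_le_pow_right (by omega) (card_places_le h4)
    exact_mod_cast this
  -- A pair `(c, i)` is sent to the complementary ideal of `β c i` in `I c * B i` and to the box
  -- containing the logarithms `L c i`. If `(c, i)` and `(c', j)` have the same image, then
  -- `β c i ^ ℓ * κ c'` and `β c' j ^ ℓ * κ c` generate `B i ^ ℓ / B j ^ ℓ` with small height, which
  -- forces `i = j`; then `I c` and `I c'` differ by the principal ideal `β c i / β c' i`.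
  have hcard : Fintype.card ({c : ClassGroup (𝓞 K) // c ^ ℓ = 1} × ι) ≤ (S ×ˢ T).card := by
    rw [← Finset.card_univ]
    apply Finset.card_le_card_of_injOn (fun q => (a q.1 q.2, fun w => ⌊L q.1 q.2 w / h⌋))
    · rintro ⟨c, i⟩ -
      simp only [Finset.coe_product, Set.mem_prod, Finset.mem_coe]
      constructor
      · rw [hS, Finset.mem_filter, Set.Finite.mem_toFinset]
        refine ⟨?_, ha0 c i⟩
        change Ideal.absNorm (a c i) ≤ ⌊17 * √D⌋₊
        apply Nat.le_floor
        have := haN c i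
        rw [hA4] at this
        have := hBpos i
        nlinarith
      · rw [hT, Fintype.mem_piFinset]
        intro w
        rw [Finset.mem_Icc]
        have hN : 12 / η ≤ N := Nat.le_ceil _
        have hN' : 12 * Real.log D ≤ N * h := by
          rw [div_le_iff₀ hη] at hN
          rw [hh]; nlinarith
        have h1 := (hLw c i w).1
        have h2 := (hLw c i w).2
        have h3 := hlogA i
        constructor
        · rw [Int.le_floor, le_div_iff₀ hh0]
          push_cast
          simp only [hL]
          linarith
        · rw [← Int.lt_add_one_iff, Int.floor_lt, div_lt_iff₀ hh0]
          push_cast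
          simp only [hL]
          nlinarith
    · rintro ⟨c, i⟩ - ⟨c', j⟩ - heq
      simp only [Prod.mk.injEq] at heq
      obtain ⟨hae, hbox⟩ := heq
      have hij : i = j := by
        by_contra hne
        refine hsep i j hne (β c i ^ ℓ * κ c') (β c' j ^ ℓ * κ c)
          (mul_ne_zero (pow_ne_zero _ (hβ0 _ _)) (hκ0 _))
          (mul_ne_zero (pow_ne_zero _ (hβ0 _ _)) (hκ0 _)) ?_ ?_
        · rw [← Ideal.span_singleton_mul_span_singleton, ← Ideal.span_singleton_mul_span_singleton,
            ← Ideal.span_singleton_pow, ← Ideal.span_singleton_pow, hβa, hβa, ← hIκ, ← hIκ, hae]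
          ring
        · intro w
          have hw : ∀ z : 𝓞 K, z ≠ 0 → 0 < w (z : K) := fun z hz => by
            rw [InfinitePlace.pos_iff]; simpa using hz
          have p1 := hw _ (hβ0 c i)
          have p2 := hw _ (hβ0 c' j)
          have p3 := hw _ (hκ0 c)
          have p4 := hw _ (hκ0 c')
          have hD0 : 0 < D := by linarith
          have hfl := Int.abs_sub_lt_one_of_floor_eq_floor (congrFun hbox w)
          rw [← sub_div, abs_lt, lt_div_iff₀ hh0, div_lt_iff₀ hh0] at hfl
          have h5 := hfl.2
          simp only [hL] at h5
          rw [← Real.log_le_log_iff (by simp only [map_mul, map_pow]; positivity)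
            (by simp only [map_mul, map_pow]; positivity)]
          simp only [map_mul, map_pow]
          rw [Real.log_mul (by positivity) (by positivity), Real.log_mul (by positivity)
            (by positivity), Real.log_mul (by positivity) (by positivity), Real.log_pow,
            Real.log_pow, Real.log_pow, Real.log_rpow hD0]
          have h6 : (ℓ : ℝ) * (Real.log (w (β c i : K)) - Real.log (w (κ c : K)) / ℓ -
              (Real.log (w (β c' j : K)) - Real.log (w (κ c' : K)) / ℓ)) ≤ ℓ * h := by
            apply mul_le_mul_of_nonneg_left _ hℓ0.le
            linarith
          have h7 : (ℓ : ℝ) * (Real.log (w (β c i : K)) - Real.log (w (κ c : K)) / ℓ -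
              (Real.log (w (β c' j : K)) - Real.log (w (κ c' : K)) / ℓ)) =
              ℓ * Real.log (w (β c i : K)) - Real.log (w (κ c : K)) -
              (ℓ * Real.log (w (β c' j : K)) - Real.log (w (κ c' : K))) := by
            exact hcancel _ _ _ _
          rw [h7] at h6
          linarith
      subst hij
      have : c = c' := by
        apply Subtype.ext
        rw [← hIc c, ← hIc c', eq_comm, ClassGroup.mk0_eq_mk0_iff]
        refine ⟨β c i, β c' i, hβ0 _ _, hβ0 _ _, ?_⟩
        rw [hβa, hβa, hae]
        ring
      rw [this]
  rw [Finset.card_product, Fintype.card_prod] at hcard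
  rw [Nat.card_eq_fintype_card]
  have hcardR : (Fintype.card {c : ClassGroup (𝓞 K) // c ^ ℓ = 1} : ℝ) * Fintype.card ι ≤
      S.card * T.card := by exact_mod_cast hcard
  refine hcardR.trans ?_
  calc (S.card : ℝ) * T.card ≤ (C₁ * (17 * √D) ^ (1 + ε)) * (2 * N + 1) ^ 4 :=
        mul_le_mul hScard hTcard (Nat.cast_nonneg _) (by positivity)
    _ = (2 * N + 1) ^ 4 * (C₁ * 17 ^ (1 + ε)) * (√D) ^ (1 + ε) := by
      rw [Real.mul_rpow (by norm_num) (by positivity)]; ring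
    _ ≤ _ := by
      apply mul_le_mul_of_nonneg_left _ (by positivity)
      rw [Real.sqrt_eq_rpow, ← Real.rpow_mul (by linarith)]
      apply Real.rpow_le_rpow_of_exponent_le (by linarith)
      linarith

end EV2

/-! ### Discriminant bounds from small elements -/

section DiscBound
open NumberField NumberField.InfinitePlace

variable {K : Type} [Field K] [NumberField K]

/-- The discriminant of `K` is at most that of any family of integers independent over `ℚ`. -/
lemma abs_discr_le_family (h4 : Module.finrank ℚ K = 4) (b : Fin 4 → 𝓞 K)
    (hli : LinearIndependent ℚ (fun i => (b i : K))) :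
    |(discr K : ℝ)| ≤ |((Algebra.discr ℚ (fun i => (b i : K)) : ℚ) : ℝ)| := by
  classical
  let e : Module.Free.ChooseBasisIndex ℤ (𝓞 K) ≃ Fin 4 := Fintype.equivFinOfCardEq (by
    rw [← Module.finrank_eq_card_chooseBasisIndex, RingOfIntegers.rank, h4])
  let ω : Module.Basis (Fin 4) ℤ (𝓞 K) := (RingOfIntegers.basis K).reindex e
  have h1 : Algebra.discr ℤ b = (ω.toMatrix b).det ^ 2 * discr K := by
    rw [← discr_eq_discr K ω, ← Algebra.discr_of_matrix_vecMul, Module.Basis.toMatrix_map_vecMul]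
  have h2 : Algebra.discr ℚ (fun i => (b i : K)) = ((Algebra.discr ℤ b : ℤ) : ℚ) := by
    rw [Algebra.discr_def, Algebra.discr_def,
      show ((Algebra.traceMatrix ℤ b).det : ℚ) = Int.castRingHom ℚ (Algebra.traceMatrix ℤ b).det
      from rfl, RingHom.map_det]
    congr 1
    ext i j
    simp only [Algebra.traceMatrix_apply, Algebra.traceForm_apply, RingHom.mapMatrix_apply,
      Matrix.map_apply, Int.coe_castRingHom]
    rw [Algebra.coe_trace_int]
    simp
  have h3 : Algebra.discr ℚ (fun i => (b i : K)) ≠ 0 := by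
    have hc : Fintype.card (Fin 4) = Module.finrank ℚ K := by simp [h4]
    have := Algebra.discr_not_zero_of_basis ℚ (basisOfLinearIndependentOfCardEqFinrank hli hc)
    rwa [coe_basisOfLinearIndependentOfCardEqFinrank] at this
  rw [h2, h1] at h3
  rw [h2, h1]
  generalize (ω.toMatrix b).det = m at h3 ⊢
  push_cast at h3 ⊢
  have hm : m ≠ 0 := by
    rintro rfl
    simp at h3
  have h5 : 1 ≤ m ^ 2 := by
    have : 0 < m ^ 2 := by positivity
    exact this
  rw [abs_mul]
  have h6 : (1 : ℝ) ≤ |(m : ℝ) ^ 2| := by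
    rw [abs_of_nonneg (by positivity)]; exact_mod_cast h5
  nlinarith [abs_nonneg (discr K : ℝ)]

/-- Leibniz expansion of the determinant of conjugates, with its `4! = 24` terms. -/
lemma abs_discr_family_le (h4 : Module.finrank ℚ K = 4) (b : Fin 4 → K) (M : Fin 4 → ℝ)
    (hb : ∀ i, ∀ w : InfinitePlace K, w (b i) ≤ M i) :
    |((Algebra.discr ℚ b : ℚ) : ℝ)| ≤ (24 * ∏ i, M i) ^ 2 := by
  classical
  let e : Fin 4 ≃ (K →ₐ[ℚ] ℂ) := (Fintype.equivFinOfCardEq (by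
    rw [← h4]; exact AlgHom.card ℚ K ℂ)).symm
  have h1 := Algebra.discr_eq_det_embeddingsMatrixReindex_pow_two ℚ ℂ b e
  have h2 : |((Algebra.discr ℚ b : ℚ) : ℝ)| =
      ‖(Algebra.embeddingsMatrixReindex ℚ ℂ b e).det‖ ^ 2 := by
    rw [← norm_pow, ← h1]
    simp
  rw [h2]
  gcongr
  rw [Matrix.det_apply]
  refine (norm_sum_le _ _).trans ?_
  have h3 : ∀ σ ∈ (Finset.univ : Finset (Equiv.Perm (Fin 4))),
      ‖Equiv.Perm.sign σ • ∏ i, Algebra.embeddingsMatrixReindex ℚ ℂ b e (σ i) i‖ ≤ ∏ i, M i := by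
    intro σ _
    rw [Units.smul_def, zsmul_eq_mul, norm_mul]
    have : ‖(((Equiv.Perm.sign σ : ℤˣ) : ℤ) : ℂ)‖ = 1 := by
      rcases Int.units_eq_one_or (Equiv.Perm.sign σ) with h | h <;> simp [h]
    rw [this, one_mul, norm_prod, ← Equiv.prod_comp σ M]
    apply Finset.prod_le_prod (fun i _ => norm_nonneg _)
    intro i _
    exact hb (σ i) (InfinitePlace.mk (e i).toRingHom)
  refine (Finset.sum_le_sum h3).trans ?_
  rw [Finset.sum_const, Finset.card_univ, Fintype.card_perm]
  simp [Nat.factorial]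

/-- If a quartic field contains `√d` and an integer `θ` outside `ℚ(√d)` with all conjugates
bounded by `M`, then its discriminant is `O(d ^ 2 * M ^ 4)`, as witnessed by the integers
`1, √d, θ, √d θ`. That `θ` lies outside `ℚ(√d)` is expressed by an automorphism `τ` fixing `√d` and
moving `θ`. -/
lemma abs_discr_le_of_small (h4 : Module.finrank ℚ K = 4) (d : ℤ) (hd : ¬ IsSquare d)
    (r θ : 𝓞 K) (hr : r ^ 2 = (d : 𝓞 K)) (τ : K ≃ₐ[ℚ] K) (hτr : τ (r : K) = r)
    (hτθ : τ (θ : K) ≠ θ) (M : ℝ) (hM : ∀ w : InfinitePlace K, w (θ : K) ≤ M) :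
    |(discr K : ℝ)| ≤ 576 * (d : ℝ) ^ 2 * M ^ 4 := by
  have hrK : (r : K) ^ 2 = (d : K) := by
    have := congrArg (algebraMap (𝓞 K) K) hr
    simpa using this
  have hdQ : ∀ u v : ℚ, u ^ 2 = d * v ^ 2 → u = 0 ∧ v = 0 := by
    intro u v huv
    by_cases hv : v = 0
    · subst hv; simpa using huv
    · exfalso
      apply hd
      rw [← Rat.isSquare_intCast_iff]
      exact ⟨u / v, by field_simp; linarith⟩
  have hind : ∀ u v : ℚ, (u : K) + v * r = 0 → u = 0 ∧ v = 0 := by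
    intro u v huv
    apply hdQ
    have : (u : K) ^ 2 = d * v ^ 2 := by
      rw [← hrK]; linear_combination (u - v * r : K) * huv
    exact_mod_cast this
  have hli : LinearIndependent ℚ (fun i => ((![1, r, θ, r * θ] : Fin 4 → 𝓞 K) i : K)) := by
    rw [Fintype.linearIndependent_iff]
    intro g hg
    simp only [Fin.sum_univ_four, Matrix.cons_val_zero, Matrix.cons_val_one, Matrix.cons_val,
      map_one, map_mul, Algebra.smul_def, eq_ratCast] at hg
    have h2 := congrArg τ hg
    simp only [map_add, map_mul, map_one, map_zero, map_ratCast, hτr] at h2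
    have h3 : ((g 2 : K) + g 3 * r) * (τ (θ : K) - θ) = 0 := by linear_combination h2 - hg
    rcases mul_eq_zero.mp h3 with h3 | h3
    swap
    · exact absurd (sub_eq_zero.mp h3) hτθ
    have h4 : (g 0 : K) + g 1 * r = 0 := by linear_combination hg - h3 * θ
    obtain ⟨e0, e1⟩ := hind _ _ h4
    obtain ⟨e2, e3⟩ := hind _ _ h3
    intro i
    fin_cases i <;> assumption
  refine (abs_discr_le_family h4 _ hli).trans ?_
  have hwr : ∀ w : InfinitePlace K, w (r : K) ≤ √|(d : ℝ)| := by
    intro w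
    apply Real.le_sqrt_of_sq_le
    rw [← map_pow, hrK]
    rw [InfinitePlace.map_intCast]
    exact le_of_eq (Int.norm_eq_abs d)
  refine (abs_discr_family_le h4 _ ![1, √|(d : ℝ)|, M, √|(d : ℝ)| * M] ?_).trans ?_
  · intro i w
    fin_cases i
    · simp
    · simpa using hwr w
    · simpa using hM w
    · simp only [Fin.reduceFinMk, Matrix.cons_val, map_mul]
      exact mul_le_mul (hwr w) (hM w) (apply_nonneg _ _) (by positivity)
  · apply le_of_eq
    simp only [Fin.prod_univ_four, Matrix.cons_val_zero, Matrix.cons_val_one, Matrix.cons_val]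
    have := Real.sq_sqrt (abs_nonneg (d : ℝ))
    calc _ = 576 * ((√|(d : ℝ)|) ^ 2) ^ 2 * M ^ 4 := by ring
      _ = _ := by rw [this, sq_abs]

end DiscBound

/-! ### Involutions in a dihedral Galois group -/

section Galois

/-- The facts on `D₄` that are used, for a noncentral involution `h` and the central one. -/
lemma dihedral_facts : ∀ h : DihedralGroup 4, h * h = 1 → h ≠ 1 → h ≠ .r 2 →
    ∀ σ : DihedralGroup 4, σ ≠ 1 → σ ≠ h → σ ≠ .r 2 → σ ≠ h * .r 2 →
      h * σ = σ * (h * .r 2) ∧ (σ * σ = 1 ∨ σ * σ = .r 2) ∧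
      ∀ g : DihedralGroup 4, ∃ e : DihedralGroup 4,
        (e = 1 ∨ e = h ∨ e = .r 2 ∨ e = h * .r 2) ∧ (g = e ∨ g = σ * e) := by
  decide

lemma dihedral_central : ∀ g : DihedralGroup 4, .r 2 * g = g * .r 2 := by decide

variable {L : Type} [Field L] [CharZero L] [Algebra ℚ L] [FiniteDimensional ℚ L] [IsGalois ℚ L]

lemma exists_rat_of_fixed (x : L) (hx : ∀ g : L ≃ₐ[ℚ] L, g x = x) : ∃ q : ℚ, x = q := by
  obtain ⟨q, hq⟩ := (IsGalois.mem_range_algebraMap_iff_fixed x).mpr hx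
  exact ⟨q, by simp [← hq]⟩

lemma sign_of_sq {c : L} {d : ℚ} (hc : c ^ 2 = d) (g : L ≃ₐ[ℚ] L) : g c = c ∨ g c = -c := by
  apply sq_eq_sq_iff_eq_or_eq_neg.mp
  rw [← map_pow, hc, map_ratCast]

lemma not_rat_of_sq {c : L} {d : ℤ} (hd : ¬ IsSquare d) (hc : c ^ 2 = d) (q : ℚ) : c ≠ q := by
  rintro rfl
  apply hd
  rw [← Rat.isSquare_intCast_iff]
  exact ⟨q, by have : (q : L) ^ 2 = ((d : ℚ) : L) := by simpa using hc
               rw [← pow_two]; exact_mod_cast this.symm⟩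

/-- Let `h` be a noncentral and `z` the central involution of a `D₄`-extension, and let `√d`,
`√d₁` be fixed by `z` with `√d` fixed by `h`. If `h s = s` and `z s = -s`, then `s ^ 2` lies in
`ℚ(√d)`, and its norm to `ℚ` is `d₁` or `d * d₁` up to squares; the trace of `s ^ 2` is an integer
if `s` is integral. -/
lemma quartic_of_anti (e : (L ≃ₐ[ℚ] L) ≃* DihedralGroup 4) (h z : L ≃ₐ[ℚ] L)
    (hz : e z = .r 2) (hh : h * h = 1) (h1 : h ≠ 1) (hhz : h ≠ z)
    (d d₁ : ℤ) (hd : ¬ IsSquare d) (hd₁ : ¬ IsSquare d₁) (hdd : ¬ IsSquare (d * d₁))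
    (c c₁ : L) (hc : c ^ 2 = d) (hc₁ : c₁ ^ 2 = d₁) (hhc : h c = c) (hzc : z c = c)
    (hzc₁ : z c₁ = c₁) (s : L) (hs0 : s ≠ 0) (hhs : h s = s) (hzs : z s = -s) :
    ∃ u v q : ℚ, s ^ 2 = u + v * c ∧
      (u ^ 2 - d * v ^ 2 = d₁ * q ^ 2 ∨ u ^ 2 - d * v ^ 2 = d * d₁ * q ^ 2) ∧
      (IsIntegral ℤ s → ∃ k : ℤ, 2 * u = k) := by
  have hc0 : c ≠ 0 := by simpa using not_rat_of_sq hd hc 0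
  have hc₁0 : c₁ ≠ 0 := by simpa using not_rat_of_sq hd₁ hc₁ 0
  obtain ⟨σ, hσ⟩ : ∃ σ : L ≃ₐ[ℚ] L, σ c ≠ c := by
    by_contra! hcon
    obtain ⟨q, hq⟩ := exists_rat_of_fixed c hcon
    exact not_rat_of_sq hd hc q hq
  have hσc : σ c = -c := (sign_of_sq (d := d) (by simpa using hc) σ).resolve_left hσ
  obtain ⟨f1, f2, f3⟩ := dihedral_facts (e h) (by rw [← map_mul, hh, map_one]) (by simpa using h1)
    (by rw [← hz]; exact fun hk => hhz (e.injective hk)) (e σ)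
    (by intro hk; apply hσ; rw [show σ = 1 by simpa using hk]; rfl)
    (by intro hk; apply hσ; rw [e.injective hk, hhc])
    (by rw [← hz]; intro hk; apply hσ; rw [e.injective hk, hzc])
    (by rw [← hz, ← map_mul]; intro hk; apply hσ; rw [e.injective hk, AlgEquiv.mul_apply, hzc, hhc])
  have f1' : ∀ x, h (σ x) = σ (h (z x)) := by
    intro x
    have : h * σ = σ * (h * z) := e.injective (by simp [hz, f1])
    exact DFunLike.congr_fun this x
  have fz : ∀ x, z (σ x) = σ (z x) := by
    intro x
    have : z * σ = σ * z := e.injective (by simp only [map_mul, hz, dihedral_central])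
    exact DFunLike.congr_fun this x
  have f2' : (∀ x, σ (σ x) = x) ∨ (∀ x, σ (σ x) = z x) := by
    rcases f2 with f2 | f2
    · left; intro x
      have : σ * σ = 1 := e.injective (by simp [f2])
      exact DFunLike.congr_fun this x
    · right; intro x
      have : σ * σ = z := e.injective (by simp [f2, hz])
      exact DFunLike.congr_fun this x
  have rat : ∀ x : L, h x = x → z x = x → σ x = x → ∃ q : ℚ, x = q := by
    intro x hx zx σx
    apply exists_rat_of_fixed
    intro g
    obtain ⟨ε, he, hg⟩ := f3 (e g)
    have hε : (e.symm ε) x = x := by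
      rcases he with rfl | rfl | rfl | rfl
      · simp
      · simpa using hx
      · rw [← hz]; simpa using zx
      · rw [← hz, ← map_mul]; simp [zx, hx]
    rcases hg with hg | hg
    · rw [← hg] at hε; simpa using hε
    · have : g = σ * e.symm ε := e.injective (by simp [hg])
      rw [this, AlgEquiv.mul_apply, hε, σx]
  have hzs2 : z (s ^ 2) = s ^ 2 := by rw [map_pow, hzs, neg_sq]
  have hhs2 : h (s ^ 2) = s ^ 2 := by rw [map_pow, hhs]
  have hσ2 : σ (σ (s ^ 2)) = s ^ 2 := by
    rcases f2' with f | f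
    · rw [f]
    · rw [f, hzs2]
  obtain ⟨t, ht⟩ := rat (s ^ 2 + σ (s ^ 2)) (by rw [map_add, f1', hzs2, hhs2])
    (by rw [map_add, fz, hzs2]) (by rw [map_add, hσ2, add_comm])
  obtain ⟨m, hm⟩ := rat ((s ^ 2 - σ (s ^ 2)) / c)
    (by rw [map_div₀, map_sub, f1', hzs2, hhs2, hhc])
    (by rw [map_div₀, map_sub, fz, hzs2, hzc])
    (by rw [map_div₀, map_sub, hσ2, hσc, div_neg, ← neg_div, neg_sub])
  rw [div_eq_iff hc0] at hm
  have hs2 : s ^ 2 = ((t / 2 : ℚ) : L) + ((m / 2 : ℚ) : L) * c := by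
    push_cast
    linear_combination (ht + hm) / 2
  have hσs2 : σ (s ^ 2) = ((t / 2 : ℚ) : L) - ((m / 2 : ℚ) : L) * c := by
    push_cast
    linear_combination (ht - hm) / 2
  have hn : (s * σ s) ^ 2 = (((t / 2) ^ 2 - d * (m / 2) ^ 2 : ℚ) : L) := by
    rw [mul_pow, ← map_pow, hσs2, hs2]
    push_cast
    linear_combination (-(m / 2) ^ 2 : L) * hc
  have hhc₁ : h c₁ = -c₁ := by
    refine (sign_of_sq (d := d₁) (by simpa using hc₁) h).resolve_left fun hk => ?_
    have hσc₁ : σ c₁ = -c₁ := by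
      refine (sign_of_sq (d := d₁) (by simpa using hc₁) σ).resolve_left fun hk' => ?_
      obtain ⟨q, hq⟩ := rat c₁ hk hzc₁ hk'
      exact not_rat_of_sq hd₁ hc₁ q hq
    obtain ⟨q, hq⟩ := rat (c * c₁) (by rw [map_mul, hk, hhc]) (by rw [map_mul, hzc, hzc₁])
      (by rw [map_mul, hσc, hσc₁, neg_mul_neg])
    exact not_rat_of_sq hdd (c := c * c₁) (by push_cast; rw [mul_pow, hc, hc₁]) q hq
  have hx0 : s * σ s ≠ 0 := mul_ne_zero hs0 (by simpa using hs0)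
  have hhx : h (s * σ s) = -(s * σ s) := by
    rw [map_mul, f1', hzs, map_neg, hhs, map_neg, mul_neg]
  have hzx : z (s * σ s) = s * σ s := by
    rw [map_mul, fz, hzs, map_neg, neg_mul_neg]
  have h_int : IsIntegral ℤ s → ∃ k : ℤ, 2 * (t / 2) = k := by
    intro hs
    have h1 : IsIntegral ℤ (algebraMap ℚ L t) := by
      rw [eq_ratCast, ← ht]
      exact (hs.pow 2).add ((hs.pow 2).map (σ.restrictScalars ℤ))
    obtain ⟨k, hk⟩ := IsIntegrallyClosed.isIntegral_iff.mp
      ((isIntegral_algebraMap_iff (algebraMap ℚ L).injective).mp h1)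
    exact ⟨k, by rw [← eq_intCast (algebraMap ℤ ℚ), hk]; ring⟩
  refine ⟨t / 2, m / 2, ?_⟩
  -- whichever of `√d₁`, `√(d * d₁)` has the same behaviour under `σ` as `s * σ s`
  have fin : ∀ (c' : L) (d' : ℤ), c' ^ 2 = d' → c' ≠ 0 → h c' = -c' → z c' = c' →
      σ ((s * σ s) / c') = (s * σ s) / c' →
      ∃ q : ℚ, ((t / 2) ^ 2 - d * (m / 2) ^ 2 : ℚ) = d' * q ^ 2 := by
    intro c' d' hc' hc'0 hhc' hzc' hσ'
    obtain ⟨q, hq⟩ := rat _ (by rw [map_div₀, hhx, hhc', neg_div_neg_eq])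
      (by rw [map_div₀, hzx, hzc']) hσ'
    refine ⟨q, ?_⟩
    rw [div_eq_iff hc'0] at hq
    rw [hq, mul_pow, hc'] at hn
    have : ((q ^ 2 * d' : ℚ) : L) = (((t / 2) ^ 2 - d * (m / 2) ^ 2 : ℚ) : L) := by
      rw [← hn]; push_cast; ring
    rw [← Rat.cast_inj (α := L), ← this]
    push_cast; ring
  have hσx := sign_of_sq hn σ
  have hσc₁ := sign_of_sq (d := d₁) (by simpa using hc₁) σ
  by_cases hsame : σ ((s * σ s) / c₁) = (s * σ s) / c₁
  · obtain ⟨q, hq⟩ := fin c₁ d₁ hc₁ hc₁0 hhc₁ hzc₁ hsame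
    exact ⟨q, hs2, Or.inl hq, h_int⟩
  · obtain ⟨q, hq⟩ := fin (c * c₁) (d * d₁) (by push_cast; rw [mul_pow, hc, hc₁])
      (mul_ne_zero hc0 hc₁0) (by rw [map_mul, hhc, hhc₁, mul_neg]) (by rw [map_mul, hzc, hzc₁])
      (by
        rw [map_div₀] at hsame
        rw [map_div₀, map_mul σ c, hσc]
        rcases hσx with hx | hx <;> rcases hσc₁ with hy | hy <;> rw [hx, hy] at hsame ⊢
        · exact absurd rfl hsame
        · rw [neg_mul_neg]
        · rw [neg_mul, neg_div_neg_eq]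
        · exact absurd (neg_div_neg_eq _ _) hsame)
    exact ⟨q, hs2, Or.inr (by exact_mod_cast hq), h_int⟩

end Galois

/-! ### The quartic equation of an anti-invariant element -/

section Galois2
variable {L : Type} [Field L] [CharZero L] [Algebra ℚ L] [FiniteDimensional ℚ L] [IsGalois ℚ L]

/-- The conclusions drawn from Galois theory: a quartic `D₄`-field has an involution `τ` fixing
some `√d`, and every `s` with `τ s = -s` satisfies a quartic equation `s ^ 2 = u + v * √d` in
which `u ^ 2 - d * v ^ 2` is `d₁` or `d * d₁` up to squares. -/
lemma exists_involution {K : Type} [Field K] [CharZero K] [Algebra ℚ K]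
    (hK4 : Module.finrank ℚ K = 4) (ι : K →ₐ[ℚ] L)
    (e : (L ≃ₐ[ℚ] L) ≃* DihedralGroup 4)
    (hcen : ∀ z : L ≃ₐ[ℚ] L, (∀ g, z * g = g * z) → (∀ x, z (ι x) = ι x) → z = 1)
    (a b : ℤ) (ha : ¬ IsSquare a) (hb : ¬ IsSquare b) (hab : ¬ IsSquare (a * b))
    (sa sb : L) (hsa : sa ^ 2 = a) (hsb : sb ^ 2 = b) :
    ∃ d d₁ : ℤ, ((d = a ∧ d₁ = b) ∨ (d = b ∧ d₁ = a) ∨ (d = a * b ∧ d₁ = a)) ∧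
      ∃ (c : K) (τ : K ≃ₐ[ℚ] K), c ^ 2 = d ∧ τ c = c ∧ (∃ x, τ x ≠ x) ∧ (∀ x, τ (τ x) = x) ∧
        ∀ s : K, s ≠ 0 → τ s = -s → ∃ u v q : ℚ, s ^ 2 = u + v * c ∧
          (u ^ 2 - d * v ^ 2 = d₁ * q ^ 2 ∨ u ^ 2 - d * v ^ 2 = d * d₁ * q ^ 2) ∧
          (IsIntegral ℤ s → ∃ k : ℤ, 2 * u = k) := by
  set z : L ≃ₐ[ℚ] L := e.symm (.r 2) with hzdef
  have hz : e z = .r 2 := by simp [z]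
  have hz1 : z ≠ 1 := by
    intro hk
    rw [hk, map_one] at hz
    revert hz; decide
  have hzc : ∀ g, z * g = g * z := by
    intro g
    apply e.injective
    rw [map_mul, map_mul, hz, dihedral_central]
  have hzz : ∀ x, z (z x) = x := by
    have : z * z = 1 := e.injective (by rw [map_mul, hz, map_one]; decide)
    exact fun x => DFunLike.congr_fun this x
  -- `z` is the square of a rotation of order four, so it fixes all square roots of rationals
  have hzfix : ∀ (x : L) (n : ℤ), x ^ 2 = n → z x = x := by
    intro x n hx
    set g := e.symm (.r 1) with hg
    have hgg : z = g * g := e.injective (by simp [hz, hg]; decide)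
    rw [hgg, AlgEquiv.mul_apply]
    rcases sign_of_sq (d := n) (by simpa using hx) g with h | h <;> simp [h]
  have hinj : ∀ x y, ι x = ι y → x = y := fun x y h => ι.injective h
  set K' : IntermediateField ℚ L := ι.fieldRange with hK'
  have hfr : Module.finrank ℚ K' = 4 := by
    rw [← hK4]; exact (AlgEquiv.ofInjectiveField ι).symm.toLinearEquiv.finrank_eq
  have hL : Module.finrank ℚ L = 8 := by
    rw [← IsGalois.card_aut_eq_finrank, Nat.card_congr e.toEquiv, DihedralGroup.nat_card]
  have hcard : Nat.card K'.fixingSubgroup = 2 := by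
    rw [IsGalois.card_fixingSubgroup_eq_finrank]
    have := Module.finrank_mul_finrank ℚ K' L
    rw [hfr, hL] at this; omega
  obtain ⟨⟨h, hmem⟩, hne, hall⟩ : ∃ h : K'.fixingSubgroup, h ≠ 1 ∧ ∀ g, g = 1 ∨ g = h := by
    obtain ⟨h, hh, huniq⟩ := (Nat.card_eq_two_iff' (1 : K'.fixingSubgroup)).mp hcard
    exact ⟨h, hh, fun g => or_iff_not_imp_left.mpr (huniq g)⟩
  have h1 : h ≠ 1 := fun hk => hne (Subtype.ext hk)
  have hh : h * h = 1 := by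
    rcases hall (⟨h, hmem⟩ * ⟨h, hmem⟩) with hk | hk
    · exact congrArg Subtype.val hk
    · exact absurd (mul_eq_left.mp hk) hne
  have hfixK : ∀ x : L, x ∈ K' ↔ h x = x := by
    intro x
    constructor
    · intro hx
      exact (IntermediateField.mem_fixingSubgroup_iff K' h).mp hmem x hx
    · intro hx
      rw [← IsGalois.fixedField_fixingSubgroup K', IntermediateField.mem_fixedField_iff]
      intro g hg
      rcases hall ⟨g, hg⟩ with hk | hk
      · rw [show g = 1 from congrArg Subtype.val hk]; rfl
      · rw [show g = h from congrArg Subtype.val hk]; exact hx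
  have hιK : ∀ x, h (ι x) = ι x := fun x => (hfixK _).mp ⟨x, rfl⟩
  have hhz : h ≠ z := by
    rintro hk
    exact hz1 (hcen z hzc fun x => by rw [← hk, hιK])
  have hzι : ∀ x, z (ι x) ∈ ι.range := by
    intro x
    have : z (ι x) ∈ K' := by
      rw [hfixK]
      have := DFunLike.congr_fun (hzc h) (ι x)
      simp only [AlgEquiv.mul_apply] at this
      rw [← this, hιK]
    exact this
  let f : K →ₐ[ℚ] K := ((AlgEquiv.ofInjective ι ι.injective).symm : ι.range →ₐ[ℚ] K).comp
    (((z : L →ₐ[ℚ] L).comp ι).codRestrict ι.range hzι)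
  have hf : ∀ x, ι (f x) = z (ι x) := by
    intro x
    have := (AlgEquiv.ofInjective ι ι.injective).apply_symm_apply ⟨z (ι x), hzι x⟩
    exact congrArg Subtype.val this
  have hff : f.comp f = AlgHom.id ℚ K := by
    ext x
    apply hinj
    simp only [AlgHom.comp_apply, hf, hzz, AlgHom.id_apply]
  let τ : K ≃ₐ[ℚ] K := AlgEquiv.ofAlgHom f f hff hff
  have hτ : ∀ x, ι (τ x) = z (ι x) := hf
  -- the three choices of the pair `d`, `d₁` are handled alike
  have main : ∀ (d d₁ : ℤ) (c c₁ : L), ¬ IsSquare d → ¬ IsSquare d₁ → ¬ IsSquare (d * d₁) →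
      c ^ 2 = d → c₁ ^ 2 = d₁ → h c = c →
      ∃ (c : K) (τ : K ≃ₐ[ℚ] K), c ^ 2 = d ∧ τ c = c ∧ (∃ x, τ x ≠ x) ∧ (∀ x, τ (τ x) = x) ∧
        ∀ s : K, s ≠ 0 → τ s = -s → ∃ u v q : ℚ, s ^ 2 = u + v * c ∧
          (u ^ 2 - d * v ^ 2 = d₁ * q ^ 2 ∨ u ^ 2 - d * v ^ 2 = d * d₁ * q ^ 2) ∧
          (IsIntegral ℤ s → ∃ k : ℤ, 2 * u = k) := by
    intro d d₁ c c₁ hd hd₁ hdd hc hc₁ hhc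
    obtain ⟨c', hcc : ι c' = c⟩ := (hfixK c).mpr hhc
    subst hcc
    refine ⟨c', τ, ?_, ?_, ?_, ?_, ?_⟩
    · apply hinj; simpa using hc
    · apply hinj; rw [hτ]; exact hzfix _ d hc
    · by_contra! hcon
      exact hz1 (hcen z hzc fun x => by rw [← hτ, hcon])
    · intro x; apply hinj; rw [hτ, hτ, hzz]
    · intro s hs0 hτs
      obtain ⟨u, v, q, h1, h2, h3⟩ := quartic_of_anti e h z hz hh h1 hhz d d₁ hd hd₁ hdd (ι c') c₁ hc hc₁
        hhc (hzfix _ d hc) (hzfix _ d₁ hc₁) (ι s) (by simpa using hs0) (hιK s)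
        (by rw [← hτ, hτs, map_neg])
      exact ⟨u, v, q, hinj _ _ (by simpa using h1), h2,
        fun hs => h3 (hs.map (ι.restrictScalars ℤ))⟩
  rcases sign_of_sq (d := a) (by simpa using hsa) h with ka | ka
  · exact ⟨a, b, by simp, main a b sa sb ha hb hab hsa hsb ka⟩
  rcases sign_of_sq (d := b) (by simpa using hsb) h with kb | kb
  · exact ⟨b, a, by simp, main b a sb sa hb ha (by rwa [mul_comm]) hsb hsa kb⟩
  refine ⟨a * b, a, by simp, main (a * b) a (sa * sb) sa hab ha ?_ ?_ hsa ?_⟩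
  · rw [mul_right_comm]
    rintro ⟨m, hm⟩
    have ha0 : a ≠ 0 := by rintro rfl; exact ha (by simp)
    apply hb
    rw [← Rat.isSquare_intCast_iff]
    refine ⟨m / a, ?_⟩
    have : ((a * a * b : ℤ) : ℚ) = (m * m : ℤ) := by rw [hm]
    push_cast at this
    field_simp
    linarith
  · push_cast; rw [mul_pow, hsa, hsb]
  · rw [map_mul, ka, kb, neg_mul_neg]

end Galois2

/-! ### Fields in the family -/

section Concrete

/-- A central element of the Galois group of the normal closure of `K` is trivial as soon as it
fixes `K`. -/
lemma normalClosure_central {F Ω : Type} [Field F] [Field Ω] [Algebra F Ω] [Normal F Ω]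
    (K L : IntermediateField F Ω) (hL : L = normalClosure F K Ω) (z : L ≃ₐ[F] L)
    (hz : ∀ g, z * g = g * z) (hK : K ≤ L) (hfix : ∀ x, z (inclusion hK x) = inclusion hK x) :
    z = 1 := by
  have : Normal F L := by rw [hL]; exact normalClosure.normal F K Ω
  let E : IntermediateField F Ω := (fixedField (Subgroup.zpowers z)).map L.val
  have hE : ∀ x : L, (x : Ω) ∈ E ↔ z x = x := by
    intro x
    have h1 : (x : Ω) ∈ E ↔ x ∈ fixedField (Subgroup.zpowers z) := by
      constructor
      · rintro ⟨y, hy, hxy⟩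
        rwa [← Subtype.ext hxy]
      · intro hx
        exact ⟨x, hx, rfl⟩
    rw [h1, mem_fixedField_iff]
    constructor
    · intro h; exact h z (Subgroup.mem_zpowers z)
    · rintro h g hg
      have : Subgroup.zpowers z ≤ MulAction.stabilizer (L ≃ₐ[F] L) x := by
        rw [Subgroup.zpowers_le]; exact h
      exact this hg
  have hEn : Normal F E := by
    rw [normal_iff_forall_map_le']
    rintro σ _ ⟨_, ⟨y, hy, rfl⟩, rfl⟩
    have hy' : z y = y := (hE y).mp ⟨y, hy, rfl⟩
    have h2 : (σ (y : Ω)) = ((σ.restrictNormal L y : L) : Ω) :=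
      (AlgEquiv.restrictNormal_commutes σ L y).symm
    change σ (y : Ω) ∈ E
    rw [h2, hE]
    have := DFunLike.congr_fun (hz (σ.restrictNormal L)) y
    simp only [AlgEquiv.mul_apply, hy'] at this
    exact this
  have hle : L ≤ E := by
    rw [hL]
    apply (normalClosure_le_iff_of_normal (K₁ := K)).mpr
    intro x hx
    exact (hE ⟨x, hK hx⟩).mpr (hfix ⟨x, hx⟩)
  ext x
  rw [(hE x).mp (hle x.2)]
  rfl

/-- `Algebra ℚ Qbar` is found through `DivisionRing.toRatAlgebra`, whereas the library proves
normality for `AlgebraicClosure.instAlgebra`; the two structures agree as `ℚ`-algebra structures are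
unique. -/
lemma normal_Qbar : Normal ℚ Qbar := by
  have e : (AlgebraicClosure.instAlgebra ℚ : Algebra ℚ (AlgebraicClosure ℚ)) =
      DivisionRing.toRatAlgebra := Subsingleton.elim _ _
  have : IsAlgClosure ℚ Qbar := e ▸ (inferInstance : @IsAlgClosure ℚ (AlgebraicClosure ℚ) _ _
    (AlgebraicClosure.instAlgebra ℚ) _)
  exact IsAlgClosure.normal ℚ Qbar

/-- `exists_involution` for the members of the family, applied inside their normal closures. -/
lemma exists_involution_of_mem (a b : ℤ) (ha : ¬ IsSquare a) (hb : ¬ IsSquare b)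
    (hab : ¬ IsSquare (a * b)) (sa sb : Qbar) (hsa : sa ^ 2 = (a : Qbar)) (hsb : sb ^ 2 = (b : Qbar))
    (K : IntermediateField ℚ Qbar) (hK : K ∈ F4 (adjoin ℚ {sa, sb})) :
    ∃ d d₁ : ℤ, ((d = a ∧ d₁ = b) ∨ (d = b ∧ d₁ = a) ∨ (d = a * b ∧ d₁ = a)) ∧
      ∃ (c : K) (τ : K ≃ₐ[ℚ] K), c ^ 2 = d ∧ τ c = c ∧ (∃ x, τ x ≠ x) ∧ (∀ x, τ (τ x) = x) ∧
        ∀ s : K, s ≠ 0 → τ s = -s → ∃ u v q : ℚ, s ^ 2 = u + v * c ∧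
          (u ^ 2 - d * v ^ 2 = d₁ * q ^ 2 ∨ u ^ 2 - d * v ^ 2 = d * d₁ * q ^ 2) ∧
          (IsIntegral ℤ s → ∃ k : ℤ, 2 * u = k) := by
  obtain ⟨⟨h4, ⟨e⟩⟩, hQ⟩ := hK
  have hfin : FiniteDimensional ℚ K := Module.finite_of_finrank_pos (by omega)
  have := normal_Qbar
  have : Normal ℚ (galCl K) := normalClosure.normal ℚ K Qbar
  have : FiniteDimensional ℚ (galCl K) := normalClosure.is_finiteDimensional ℚ K Qbar
  have : IsGalois ℚ (galCl K) := ⟨⟩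
  have hKL : K ≤ galCl K := le_normalClosure K
  have ma : sa ∈ galCl K := hQ (subset_adjoin ℚ _ (by simp))
  have mb : sb ∈ galCl K := hQ (subset_adjoin ℚ _ (by simp))
  let ι : K →ₐ[ℚ] galCl K := inclusion hKL
  exact exists_involution h4 ι e (fun z hz hf => normalClosure_central K _ rfl z hz hKL hf)
    a b ha hb hab ⟨sa, ma⟩ ⟨sb, mb⟩ (Subtype.ext (by simpa using hsa)) (Subtype.ext (by simpa using hsb))

end Concrete

/-! ### The norm of `s - w` -/

section QuarticNorm
variable {K : Type} [Field K] [NumberField K]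

/-- The norm of `s - w` when `s` is a root of the biquadratic polynomial `X ^ 4 - t X ^ 2 + n`. -/
lemma norm_sub_eq (h4 : Module.finrank ℚ K = 4) (d : ℤ) (hd : ¬ IsSquare d) (c s : K)
    (hc : c ^ 2 = d) (τ : K ≃ₐ[ℚ] K) (hτs : τ s = -s) (hs0 : s ≠ 0) (u v : ℚ)
    (hs : s ^ 2 = u + v * c) (hv : v ≠ 0) (w : ℚ) :
    Algebra.norm ℚ (s - w) = w ^ 4 - 2 * u * w ^ 2 + (u ^ 2 - d * v ^ 2) := by
  have hind : ∀ x y : ℚ, (x : K) + y * c = 0 → x = 0 ∧ y = 0 := by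
    intro x y hxy
    by_cases hy : y = 0
    · subst hy; simpa using hxy
    · exfalso
      apply hd
      rw [← Rat.isSquare_intCast_iff]
      have h2 : (x : K) ^ 2 = d * y ^ 2 := by
        rw [← hc]; linear_combination (x - y * c : K) * hxy
      have h3 : x ^ 2 = d * y ^ 2 := by exact_mod_cast h2
      exact ⟨x / y, by field_simp; linarith⟩
  have hli : LinearIndependent ℚ (![1, s, s ^ 2, s ^ 3] : Fin 4 → K) := by
    rw [Fintype.linearIndependent_iff]
    intro g hg
    simp only [Fin.sum_univ_four, Matrix.cons_val_zero, Matrix.cons_val_one, Matrix.cons_val,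
      Algebra.smul_def, eq_ratCast] at hg
    have h2 := congrArg τ hg
    simp only [map_add, map_mul, map_pow, map_one, map_zero, map_ratCast, hτs] at h2
    have h3 : ((g 0 : K) + g 2 * u) + (g 2 * v) * c = 0 := by
      linear_combination (h2 + hg) / 2 - (g 2 : K) * hs
    have h5 : s * (((g 1 : K) + g 3 * u) + (g 3 * v) * c) = 0 := by
      linear_combination (hg - h2) / 2 - (g 3 : K) * s * hs
    have h5 := (mul_eq_zero.mp h5).resolve_left hs0
    obtain ⟨e0, e1⟩ := hind (g 0 + g 2 * u) (g 2 * v) (by push_cast; exact h3)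
    obtain ⟨e2, e3⟩ := hind (g 1 + g 3 * u) (g 3 * v) (by push_cast; exact h5)
    have k2 := (mul_eq_zero.mp e1).resolve_right hv
    have k3 := (mul_eq_zero.mp e3).resolve_right hv
    rw [k2] at e0
    rw [k3] at e2
    intro i
    fin_cases i
    · simpa using e0
    · simpa using e2
    · exact k2
    · exact k3
  have hcard : Fintype.card (Fin 4) = Module.finrank ℚ K := by simp [h4]
  let B := basisOfLinearIndependentOfCardEqFinrank hli hcard
  have hB : ⇑B = ![1, s, s ^ 2, s ^ 3] := coe_basisOfLinearIndependentOfCardEqFinrank hli hcard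
  have hs4 : s ^ 4 = 2 * u * s ^ 2 - (u ^ 2 - d * v ^ 2) := by
    linear_combination (s ^ 2 - u + v * c) * hs + v ^ 2 * hc
  let M : Matrix (Fin 4) (Fin 4) ℚ :=
    !![-w, 0, 0, -(u ^ 2 - d * v ^ 2); 1, -w, 0, 0; 0, 1, -w, 2 * u; 0, 0, 1, -w]
  have hM : Matrix.toLin B B M = LinearMap.mulLeft ℚ (s - w) := by
    apply B.ext
    intro i
    rw [Matrix.toLin_self, hB]
    simp only [Fin.sum_univ_four, LinearMap.mulLeft_apply, M, Algebra.smul_def, eq_ratCast]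
    fin_cases i
    · simp; ring
    · simp; ring
    · simp; ring
    · simp; linear_combination - hs4
  have hN : Algebra.leftMulMatrix B (s - w) = M := by
    rw [Algebra.leftMulMatrix_apply]
    apply (Matrix.toLin B B).injective
    rw [hM, Matrix.toLin_toMatrix]
    rfl
  rw [Algebra.norm_eq_matrix_det B, hN]
  simp [M, Matrix.det_succ_row_zero, Fin.sum_univ_succ, Fin.succAbove]
  ring

end QuarticNorm

/-! ### Roots of the quartic modulo `p` -/

section RootMod

lemma exists_zmod_of_rat_sq {p : ℕ} [Fact p.Prime] (N D : ℤ) (m : ℚ) (h : (N : ℚ) = D * m ^ 2)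
    (hD : (D : ZMod p) ≠ 0) : ∃ x : ZMod p, (N : ZMod p) = D * x ^ 2 := by
  have h1 : N * (m.den : ℤ) ^ 2 = D * m.num ^ 2 := by
    have h2 : (m.den : ℚ) ≠ 0 := by exact_mod_cast m.den_nz
    have h3 : m * m.den = m.num := Rat.mul_den_eq_num m
    have : (N : ℚ) * (m.den : ℚ) ^ 2 = D * (m.num : ℚ) ^ 2 := by
      rw [h, ← h3]; ring
    exact_mod_cast this
  have h2 : (N : ZMod p) * (m.den : ZMod p) ^ 2 = D * (m.num : ZMod p) ^ 2 := by
    have := congrArg (Int.cast : ℤ → ZMod p) h1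
    push_cast at this
    exact this
  have hden : (m.den : ZMod p) ≠ 0 := by
    intro h0
    rw [h0, zero_pow two_ne_zero, mul_zero] at h2
    have hnum : (m.num : ZMod p) = 0 := by
      rcases mul_eq_zero.mp h2.symm with h | h
      · exact absurd h hD
      · exact pow_eq_zero_iff two_ne_zero |>.mp h
    have d1 : p ∣ m.den := (ZMod.natCast_eq_zero_iff _ _).mp h0
    have d2 : p ∣ m.num.natAbs := Int.natCast_dvd.mp ((ZMod.intCast_zmod_eq_zero_iff_dvd _ _).mp hnum)
    have := Nat.dvd_gcd d2 d1
    rw [m.reduced] at this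
    exact (Fact.out : p.Prime).one_lt.ne' (Nat.dvd_one.mp this)
  refine ⟨m.num / m.den, ?_⟩
  field_simp
  exact h2

/-- If `d` is a square and `d'` a nonsquare modulo `p`, then `X ^ 4 - t X ^ 2 + n` has a root
modulo `p`: the roots of `X ^ 2 - t X + n` lie in the prime field and their product is a
nonsquare, so one of them is a square. -/
lemma exists_root_mod {p : ℕ} (hp : p.Prime) (hp2 : p ≠ 2) (d d' t n : ℤ) (m q : ℚ)
    (hd : jacobiSym d p = 1) (hd' : jacobiSym d' p = -1) (h1 : (t ^ 2 - 4 * n : ℚ) = d * m ^ 2)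
    (h2 : (n : ℚ) = d' * q ^ 2) (hn : ¬ (p : ℤ) ∣ n) :
    ∃ w : ℤ, (p : ℤ) ∣ w ^ 4 - t * w ^ 2 + n := by
  have := Fact.mk hp
  have hn0 : (n : ZMod p) ≠ 0 := fun h => hn ((ZMod.intCast_zmod_eq_zero_iff_dvd _ _).mp h)
  rw [← jacobiSym.legendreSym.to_jacobiSym] at hd hd'
  have hd0 : (d : ZMod p) ≠ 0 := by
    intro h
    rw [(legendreSym.eq_zero_iff p d).mpr h] at hd
    exact zero_ne_one hd
  have hds := (legendreSym.eq_one_iff p hd0).mp hd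
  have hds' := (legendreSym.eq_neg_one_iff p).mp hd'
  have hd'0 : (d' : ZMod p) ≠ 0 := by
    intro h
    rw [h] at hds'; exact hds' (IsSquare.zero)
  obtain ⟨x, hx⟩ := exists_zmod_of_rat_sq (p := p) (t ^ 2 - 4 * n) d m (by exact_mod_cast h1) hd0
  obtain ⟨y, hy⟩ := exists_zmod_of_rat_sq (p := p) n d' q h2 hd'0
  obtain ⟨r, hr⟩ := hds
  have two : (2 : ZMod p) ≠ 0 := by
    intro h
    have : ((2 : ℕ) : ZMod p) = 0 := by exact_mod_cast h
    rw [ZMod.natCast_eq_zero_iff] at this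
    exact hp2 ((Nat.prime_dvd_prime_iff_eq hp Nat.prime_two).mp this)
  have hy0 : y ≠ 0 := by rintro rfl; simp at hy; exact hn0 hy
  set v₁ : ZMod p := (t + r * x) / 2 with hv₁
  set v₂ : ZMod p := (t - r * x) / 2 with hv₂
  have hprod : v₁ * v₂ = n := by
    push_cast at hx
    rw [hr] at hx
    rw [hv₁, hv₂]; field_simp; linear_combination hx
  have hsum : v₁ + v₂ = t := by rw [hv₁, hv₂]; field_simp; ring
  have key : IsSquare v₁ ∨ IsSquare v₂ := by
    by_contra! hcon
    have e1 := hcon.1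
    have e2 := hcon.2
    have hne : ringChar (ZMod p) ≠ 2 := by rw [ZMod.ringChar_zmod_n]; exact hp2
    rw [← quadraticChar_neg_one_iff_not_isSquare] at e1 e2
    have e3 : quadraticChar (ZMod p) (v₁ * v₂) = 1 := by rw [map_mul, e1, e2]; norm_num
    rw [hprod, quadraticChar_one_iff_isSquare hn0, hy] at e3
    apply hds'
    obtain ⟨k, hk⟩ := e3
    exact ⟨k / y, by field_simp; linear_combination hk⟩
  have fin : ∀ v v' : ZMod p, v * v' = n → v + v' = t → IsSquare v →
      ∃ w : ℤ, (p : ℤ) ∣ w ^ 4 - t * w ^ 2 + n := by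
    rintro v v' e1 e2 ⟨w, hw⟩
    obtain ⟨w, rfl⟩ := ZMod.intCast_surjective w
    refine ⟨w, (ZMod.intCast_zmod_eq_zero_iff_dvd _ _).mp ?_⟩
    push_cast
    rw [← e1, ← e2, hw]; ring
  rcases key with h | h
  · exact fin v₁ v₂ hprod hsum h
  · exact fin v₂ v₁ (by rw [mul_comm, hprod]) (by rw [add_comm, hsum]) h

end RootMod

/-! ### Moved primes and their separation -/

section Separation
open NumberField NumberField.InfinitePlace
variable {K : Type} [Field K] [NumberField K]

/-- The action of an automorphism of `K` on the ring of integers. -/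
def intAut (τ : K ≃ₐ[ℚ] K) : 𝓞 K ≃+* 𝓞 K := RingOfIntegers.mapRingEquiv τ.toRingEquiv

lemma coe_intAut (τ : K ≃ₐ[ℚ] K) (x : 𝓞 K) : ((intAut τ x : 𝓞 K) : K) = τ (x : K) := rfl

/-- A root of the characteristic polynomial of `s` modulo `p` gives a prime above `p` that is moved
by any automorphism sending `s` to `-s`. -/
lemma exists_moved_prime (h4 : Module.finrank ℚ K = 4) (τ : K ≃ₐ[ℚ] K) (s : 𝓞 K)
    (hτs : τ (s : K) = -s) {p : ℕ} (hp : p.Prime) (hp2 : p ≠ 2) (t n w : ℤ)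
    (hN : Algebra.norm ℤ (s - (w : 𝓞 K)) = w ^ 4 - t * w ^ 2 + n) (hn : ¬ (p : ℤ) ∣ n)
    (hw : (p : ℤ) ∣ w ^ 4 - t * w ^ 2 + n) :
    ∃ P : Ideal (𝓞 K), P.IsPrime ∧ P ≠ ⊥ ∧ P.under ℤ = .span {(p : ℤ)} ∧
      P.map (intAut τ) ≠ P ∧ Ideal.absNorm P ≤ p ^ 4 := by
  have hdvd : p ∣ Ideal.absNorm (Ideal.span {s - (w : 𝓞 K)}) := by
    rw [Ideal.absNorm_span_singleton, hN]
    exact Int.natCast_dvd.mp hw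
  obtain ⟨P, hP, hPp, hPd⟩ := Ideal.exists_isMaximal_dvd_of_dvd_absNorm' hp _ hdvd
  have hmem : ∀ k : ℤ, (k : 𝓞 K) ∈ P ↔ (p : ℤ) ∣ k := by
    intro k
    rw [← Ideal.mem_span_singleton, ← hPp, Ideal.mem_comap]
    simp
  have hsw : s - (w : 𝓞 K) ∈ P := Ideal.dvd_span_singleton.mp hPd
  have hpP : ((p : ℤ) : 𝓞 K) ∈ P := (hmem p).mpr dvd_rfl
  have hp0 : ((p : ℤ) : 𝓞 K) ≠ 0 := by exact_mod_cast hp.ne_zero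
  refine ⟨P, hP.isPrime, ?_, hPp, ?_, ?_⟩
  · rintro rfl
    exact hp0 ((Ideal.mem_bot).mp hpP)
  · intro hmap
    have h1 : intAut τ (s - (w : 𝓞 K)) ∈ P := by
      rw [← hmap]; exact Ideal.mem_map_of_mem _ hsw
    have h2 : intAut τ s = -s := RingOfIntegers.ext (by rw [coe_intAut, hτs]; rfl)
    rw [map_sub, map_intCast, h2] at h1
    have h3 : ((-(2 * w) : ℤ) : 𝓞 K) ∈ P := by
      have := P.add_mem h1 hsw
      convert this using 1
      push_cast; ring
    rw [hmem, Int.dvd_neg] at h3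
    have h5 : (p : ℤ) ∣ w := by
      rcases Int.Prime.dvd_mul' hp h3 with h | h
      · have := Int.natCast_dvd_natCast.mp (by exact_mod_cast h : ((p : ℕ) : ℤ) ∣ ((2 : ℕ) : ℤ))
        exact absurd ((Nat.prime_dvd_prime_iff_eq hp Nat.prime_two).mp this) hp2
      · exact h
    apply hn
    have h6 : (p : ℤ) ∣ w ^ 4 - t * w ^ 2 := by
      rw [show w ^ 4 - t * w ^ 2 = w * (w ^ 3 - t * w) by ring]
      exact h5.mul_right _
    exact (Int.dvd_add_right h6).mp hw
  · have h1 : Ideal.absNorm P ∣ Ideal.absNorm (Ideal.span {((p : ℤ) : 𝓞 K)}) :=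
      Ideal.absNorm_dvd_absNorm_of_le ((Ideal.span_singleton_le_iff_mem _).mpr hpP)
    rw [Ideal.absNorm_span_singleton, ← eq_intCast (algebraMap ℤ (𝓞 K)), Algebra.norm_algebraMap,
      RingOfIntegers.rank, h4] at h1
    refine Nat.le_of_dvd (by positivity [hp.pos]) ?_
    simpa [Int.natAbs_pow] using h1

/-- If `P` is a prime moved by the automorphism `T`, then a relation between the `ℓ`-th powers of
`P` and of another prime `P'` cannot be given by a `T`-invariant quotient `x / y`. -/
lemma no_invariant_relation {R : Type} [CommRing R] [IsDedekindDomain R] (T : R ≃+* R)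
    (P P' : Ideal R) (hP : P.IsPrime) (hP0 : P ≠ ⊥) (hP' : P'.IsPrime) (hP'0 : P' ≠ ⊥)
    (hPP' : P ≠ P') (hT : P.map T ≠ P) (ℓ : ℕ) (hℓ : 1 ≤ ℓ) (x y : R) (hx : x ≠ 0) (hy : y ≠ 0)
    (hxy : Ideal.span {x} * P' ^ ℓ = Ideal.span {y} * P ^ ℓ) : y * T x ≠ x * T y := by
  intro hcomm
  have hTy : T y ≠ 0 := by simpa using hy
  have h2 : Ideal.span {T x} * (P'.map T) ^ ℓ = Ideal.span {T y} * (P.map T) ^ ℓ := by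
    have := congrArg (Ideal.map T) hxy
    simpa only [Ideal.map_mul, Ideal.map_pow, Ideal.map_span, Set.image_singleton] using this
  have h3 : P' ^ ℓ * (P.map T) ^ ℓ = P ^ ℓ * (P'.map T) ^ ℓ := by
    have hne : Ideal.span {x * T y} ≠ ⊥ := by
      rw [Ne, Ideal.span_singleton_eq_bot]; exact mul_ne_zero hx hTy
    apply mul_left_cancel₀ hne
    calc Ideal.span {x * T y} * (P' ^ ℓ * (P.map T) ^ ℓ)
        = (Ideal.span {x} * P' ^ ℓ) * (Ideal.span {T y} * (P.map T) ^ ℓ) := by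
          rw [← Ideal.span_singleton_mul_span_singleton, mul_mul_mul_comm]
      _ = (Ideal.span {y} * P ^ ℓ) * (Ideal.span {T x} * (P'.map T) ^ ℓ) := by rw [hxy, h2]
      _ = Ideal.span {y * T x} * (P ^ ℓ * (P'.map T) ^ ℓ) := by
          rw [← Ideal.span_singleton_mul_span_singleton, mul_mul_mul_comm]
      _ = _ := by rw [hcomm]
  have hdvd : P ∣ P' ^ ℓ * (P.map T) ^ ℓ := by
    rw [h3]; exact (dvd_pow_self P (by omega)).mul_right _
  have hprime : Prime P := Ideal.prime_of_isPrime hP0 hP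
  have hmax : P.IsMaximal := hP.isMaximal hP0
  have hmax' : P'.IsMaximal := hP'.isMaximal hP'0
  have hmaxT : (P.map T).IsMaximal := Ideal.map_isMaximal_of_equiv T
  rcases hprime.dvd_or_dvd hdvd with h | h
  · have := Ideal.dvd_iff_le.mp (hprime.dvd_of_dvd_pow h)
    exact hPP' (hmax'.eq_of_le hmax.ne_top this).symm
  · have := Ideal.dvd_iff_le.mp (hprime.dvd_of_dvd_pow h)
    exact hT (hmaxT.eq_of_le hmax.ne_top this)

/-- An integral multiple `θ = m * x / y` of a quotient that is not `T`-invariant is moved by `T`. -/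
lemma moved_of_relation {R : Type} [CommRing R] [IsDomain R] (T : R ≃+* R) (x y θ : R) (m : ℕ)
    (hm : (m : R) ≠ 0) (h : x * m = y * θ) (hxy : y * T x ≠ x * T y) : T θ ≠ θ := by
  intro hfix
  apply hxy
  have h1 := congrArg T h
  rw [map_mul, map_mul, map_natCast, hfix] at h1
  apply mul_right_cancel₀ hm
  linear_combination y * h1 - T y * h

/-- Let `P` be a prime moved by `τ` and `P'` another prime, containing the rational integer `q`. If
`P ^ ℓ / P' ^ ℓ` has a generator `x / y` of small height, then the discriminant is small. The bound is
obtained from the integer `θ = q ^ ℓ * x / y`, which lies outside `ℚ(√d)`. -/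
lemma abs_discr_le_of_relation (h4 : Module.finrank ℚ K = 4) (d : ℤ) (hd : ¬ IsSquare d)
    (r : 𝓞 K) (hr : r ^ 2 = (d : 𝓞 K)) (τ : K ≃ₐ[ℚ] K) (hτr : τ (r : K) = r)
    (P P' : Ideal (𝓞 K)) (hP : P.IsPrime) (hP0 : P ≠ ⊥) (hP' : P'.IsPrime) (hP'0 : P' ≠ ⊥)
    (hPP' : P ≠ P') (hτP : P.map (intAut τ) ≠ P) (q : ℕ) (hq0 : q ≠ 0) (hq : (q : 𝓞 K) ∈ P')
    (ℓ : ℕ) (hℓ : 1 ≤ ℓ) (x y : 𝓞 K) (hx : x ≠ 0) (hy : y ≠ 0)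
    (hxy : Ideal.span {x} * P' ^ ℓ = Ideal.span {y} * P ^ ℓ) (ρ : ℝ)
    (hw : ∀ w : InfinitePlace K, w (x : K) ≤ ρ ^ ℓ * w (y : K)) :
    |(discr K : ℝ)| ≤ 576 * (d : ℝ) ^ 2 * (((q : ℝ) ^ ℓ * ρ ^ ℓ)) ^ 4 := by
  obtain ⟨θ, hθ⟩ : ∃ θ : 𝓞 K, x * (q : 𝓞 K) ^ ℓ = y * θ := by
    have h1 : x * (q : 𝓞 K) ^ ℓ ∈ Ideal.span {x} * P' ^ ℓ :=
      Ideal.mul_mem_mul (Ideal.mem_span_singleton_self x) (Ideal.pow_mem_pow hq ℓ)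
    rw [hxy] at h1
    obtain ⟨θ, -, hθ⟩ := Ideal.mem_span_singleton_mul.mp h1
    exact ⟨θ, hθ.symm⟩
  have hyK : (y : K) ≠ 0 := by simpa using hy
  have hθK : (x : K) * (q : K) ^ ℓ = y * θ := by
    have := congrArg (algebraMap (𝓞 K) K) hθ
    simpa using this
  have hqne : ((q ^ ℓ : ℕ) : 𝓞 K) ≠ 0 := Nat.cast_ne_zero.mpr (pow_ne_zero _ hq0)
  have hmov := moved_of_relation (intAut τ) x y θ (q ^ ℓ) hqne (by rw [Nat.cast_pow]; exact hθ)
    (no_invariant_relation (intAut τ) P P' hP hP0 hP' hP'0 hPP' hτP ℓ hℓ x y hx hy hxy)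
  apply abs_discr_le_of_small h4 d hd r θ hr τ hτr
  · intro hfix
    exact hmov (RingOfIntegers.ext (by rw [coe_intAut]; exact hfix))
  · intro w
    have hwy : 0 < w (y : K) := (InfinitePlace.pos_iff).mpr hyK
    have h1 := congrArg w hθK
    rw [map_mul, map_mul, map_pow] at h1
    have h2 : w (q : K) = q := by simp
    rw [h2] at h1
    have h3 := mul_le_mul_of_nonneg_right (hw w) (pow_nonneg (Nat.cast_nonneg q : (0:ℝ) ≤ q) ℓ)
    rw [h1] at h3
    refine le_of_mul_le_mul_left ?_ hwy
    linarith

end Separation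

/-! ### Existence of moved primes -/

section Glue
open NumberField NumberField.InfinitePlace
variable {K : Type} [Field K] [NumberField K]

/-- An involution of a quartic field negates some nonzero integer of small norm. -/
lemma exists_small_anti (h4 : Module.finrank ℚ K = 4) (τ : K ≃ₐ[ℚ] K) (hmov : ∃ x, τ x ≠ x)
    (hinv : ∀ x, τ (τ x) = x) :
    ∃ s : 𝓞 K, s ≠ 0 ∧ τ (s : K) = -s ∧
      (Ideal.absNorm (Ideal.span {s}) : ℝ) ≤ 2560000 * |(discr K : ℝ)| ^ 2 := by
  obtain ⟨a, ha, hw⟩ := exists_primitive_small (K := K) h4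
  have hcoe : ((a - intAut τ a : 𝓞 K) : K) = (a : K) - τ (a : K) := by
    rw [← coe_intAut]; exact map_sub (algebraMap (𝓞 K) K) _ _
  -- a primitive element `a` is moved by `τ`, so `a - τ a` does not vanish
  refine ⟨a - intAut τ a, ?_, ?_, ?_⟩
  · intro h0
    have h1 : τ (a : K) = a := by
      rw [h0] at hcoe
      exact (sub_eq_zero.mp (hcoe.symm.trans (map_zero (algebraMap (𝓞 K) K)))).symm
    obtain ⟨x, hx⟩ := hmov
    apply hx
    clear hx
    have hxa : x ∈ IntermediateField.adjoin ℚ {(a : K)} := ha ▸ IntermediateField.mem_top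
    induction hxa using IntermediateField.adjoin_induction with
    | mem y hy => rw [Set.mem_singleton_iff.mp hy, h1]
    | algebraMap q => exact τ.commutes q
    | add y z _ _ hy hz => rw [map_add, hy, hz]
    | inv y _ hy => rw [map_inv₀, hy]
    | mul y z _ _ hy hz => rw [map_mul, hy, hz]
  · rw [hcoe, map_sub, hinv]; ring
  · have hb : ∀ w : InfinitePlace K, w ((a - intAut τ a : 𝓞 K) : K) ≤ 40 * √|(discr K : ℝ)| := by
      intro w
      have h1 := hw (w.comap (τ : K →+* K))
      rw [comap_apply] at h1
      have h2 := hw w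
      rw [hcoe]
      have h3 : w ((a : K) - τ (a : K)) ≤ w (a : K) + w (τ (a : K)) := by
        have := w.1.add_le (a : K) (-τ (a : K))
        rwa [← sub_eq_add_neg, w.1.map_neg] at this
      have h1' : w (τ (a : K)) ≤ 20 * √|(discr K : ℝ)| := h1
      linarith
    rw [← prod_places]
    calc ∏ w : InfinitePlace K, w ((a - intAut τ a : 𝓞 K) : K) ^ mult w
        ≤ ∏ w : InfinitePlace K, (40 * √|(discr K : ℝ)|) ^ mult w :=
          Finset.prod_le_prod (fun w _ => pow_nonneg (apply_nonneg w _) _)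
            (fun w _ => pow_le_pow_left₀ (apply_nonneg w _) (hb w) _)
      _ = (40 * √|(discr K : ℝ)|) ^ 4 := by
          rw [Finset.prod_pow_eq_pow_sum, sum_mult_eq, h4]
      _ = 2560000 * (√|(discr K : ℝ)| ^ 2) ^ 2 := by ring
      _ = _ := by rw [Real.sq_sqrt (abs_nonneg _)]

/-- Suppose an involution `τ` of a quartic field satisfies the conclusions of `exists_involution`.
Then the rational primes `p` with `(d | p) = 1` and `(d' | p) = -1` lie below a prime moved by `τ`,
unless they divide an integer `n` that is polynomially bounded in the discriminant. Here `n` is the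
norm of the integer `s` of `exists_small_anti`. -/
lemma exists_moved_primes (h4 : Module.finrank ℚ K = 4) (d d₁ : ℤ) (hd : ¬ IsSquare d)
    (hd₁ : ¬ IsSquare d₁) (hdd : ¬ IsSquare (d * d₁)) (c : K) (τ : K ≃ₐ[ℚ] K) (hc : c ^ 2 = d)
    (hmov : ∃ x, τ x ≠ x) (hinv : ∀ x, τ (τ x) = x)
    (hs : ∀ s : K, s ≠ 0 → τ s = -s → ∃ u v q : ℚ, s ^ 2 = u + v * c ∧
          (u ^ 2 - d * v ^ 2 = d₁ * q ^ 2 ∨ u ^ 2 - d * v ^ 2 = d * d₁ * q ^ 2) ∧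
          (IsIntegral ℤ s → ∃ k : ℤ, 2 * u = k)) :
    ∃ d' n : ℤ, (d' = d₁ ∨ d' = d * d₁) ∧ n ≠ 0 ∧
      (n.natAbs : ℝ) ≤ 2560000 * |(discr K : ℝ)| ^ 2 ∧
      ∀ p : ℕ, p.Prime → p ≠ 2 → jacobiSym d p = 1 → jacobiSym d' p = -1 → ¬ (p : ℤ) ∣ n →
        ∃ P : Ideal (𝓞 K), P.IsPrime ∧ P ≠ ⊥ ∧ P.under ℤ = .span {(p : ℤ)} ∧
          P.map (intAut τ) ≠ P ∧ Ideal.absNorm P ≤ p ^ 4 := by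
  obtain ⟨s, hs0, hτs, hsn⟩ := exists_small_anti h4 τ hmov hinv
  have hsK : (s : K) ≠ 0 := by simpa using hs0
  obtain ⟨u, v, q, hsq, hq, hk⟩ := hs s hsK hτs
  obtain ⟨t, ht⟩ := hk (RingOfIntegers.isIntegral_coe s)
  obtain ⟨d', hd', hq'⟩ : ∃ d' : ℤ, (d' = d₁ ∨ d' = d * d₁) ∧ u ^ 2 - d * v ^ 2 = d' * q ^ 2 := by
    rcases hq with h | h
    · exact ⟨d₁, Or.inl rfl, h⟩
    · exact ⟨d * d₁, Or.inr rfl, by rw [h]; push_cast; ring⟩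
  have hd's : ¬ IsSquare d' := by rcases hd' with rfl | rfl <;> assumption
  have hv : v ≠ 0 := by
    rintro rfl
    by_cases hq0 : q = 0
    · subst hq0
      have hu : u = 0 := by
        have : u ^ 2 = 0 := by linarith
        exact pow_eq_zero_iff (two_ne_zero) |>.mp this
      subst hu
      apply hsK
      have : (s : K) ^ 2 = 0 := by rw [hsq]; simp
      exact pow_eq_zero_iff (two_ne_zero) |>.mp this
    · apply hd's
      rw [← Rat.isSquare_intCast_iff]
      refine ⟨u / q, ?_⟩
      field_simp
      linarith
  have hnorm : ∀ w : ℤ, ((Algebra.norm ℤ (s - (w : 𝓞 K)) : ℤ) : ℚ)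
      = w ^ 4 - t * w ^ 2 + (u ^ 2 - d * v ^ 2) := by
    intro w
    rw [Algebra.coe_norm_int, ← ht]
    have := norm_sub_eq h4 d hd c s hc τ hτs hsK u v hsq hv w
    rw [← this]
    congr 1
    simp
  have hn := hnorm 0
  simp only [Int.cast_zero, sub_zero] at hn
  refine ⟨d', Algebra.norm ℤ s, hd', ?_, ?_, ?_⟩
  · rwa [Ne, Algebra.norm_eq_zero_iff]
  · rwa [Ideal.absNorm_span_singleton] at hsn
  · intro p hp hp2 h1 h2 h3
    have hn' : ((Algebra.norm ℤ s : ℤ) : ℚ) = u ^ 2 - d * v ^ 2 := by rw [hn]; ring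
    obtain ⟨w, hw⟩ := exists_root_mod hp hp2 d d' t (Algebra.norm ℤ s) (2 * v) q h1 h2
      (by rw [hn', ← ht]; ring) (by rw [hn', hq']) h3
    refine exists_moved_prime h4 τ s hτs hp hp2 t (Algebra.norm ℤ s) w ?_ h3 hw
    have := hnorm w
    rw [← hn'] at this
    exact_mod_cast this

end Glue

/-! ### Comparison of the thresholds -/

section Threshold
open Filter

lemma card_primeFactors_le_log {n : ℕ} (hn : n ≠ 0) :
    (n.primeFactors.card : ℝ) ≤ 2 * Real.log n := by
  have h1 : 2 ^ n.primeFactors.card ≤ n := by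
    calc 2 ^ n.primeFactors.card = ∏ p ∈ n.primeFactors, 2 := by simp
      _ ≤ ∏ p ∈ n.primeFactors, p :=
        Finset.prod_le_prod' fun p hp => (Nat.prime_of_mem_primeFactors hp).two_le
      _ ≤ n := Nat.le_of_dvd (Nat.pos_of_ne_zero hn) (Nat.prod_primeFactors_dvd n)
  have h2 : (2 : ℝ) ^ n.primeFactors.card ≤ n := by exact_mod_cast h1
  have h3 := Real.log_le_log (by positivity) h2
  rw [Real.log_pow] at h3
  have h4 : (1 : ℝ) / 2 ≤ Real.log 2 := by have := Real.log_two_gt_d9; linarith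
  have h5 : (0 : ℝ) ≤ n.primeFactors.card := Nat.cast_nonneg _
  nlinarith

/-- The inequalities that have to hold for large `D`. The last one, in which `2560000 * D ^ 2` bounds
the norm in `exists_small_anti`, rests on `9 / 10 * (1 / 5) = 9 / 50 > 1 / 6`. -/
lemma eventually_count (L : ℝ) (hL : 1 ≤ L) (N : ℕ) (A : ℝ) : ∀ᶠ D : ℝ in atTop,
    1 ≤ D ∧ N ≤ ⌊D ^ (1 / (5 * L))⌋₊ ∧ A * D ^ (9 / 10 : ℝ) < D ∧
      D ^ (1 / (6 * L)) + 2 * Real.log (2560000 * D ^ 2)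
        ≤ (⌊D ^ (1 / (5 * L))⌋₊ : ℝ) ^ (9 / 10 : ℝ) := by
  have hδ : 0 < 1 / (5 * L) := by positivity
  have hσ : 0 < 9 / (50 * L) := by positivity
  have hgap : 0 < 9 / (50 * L) - 1 / (6 * L) := by
    have : 9 / (50 * L) - 1 / (6 * L) = 1 / (75 * L) := by field_simp; norm_num
    rw [this]; positivity
  have e1 := (tendsto_rpow_atTop hδ).eventually_ge_atTop (N + 2 : ℝ)
  have e2 := (tendsto_rpow_atTop (show (0 : ℝ) < 1 / 10 by norm_num)).eventually_gt_atTop A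
  have e3 := (tendsto_rpow_atTop hgap).eventually_ge_atTop 8
  have e4 := (isLittleO_log_rpow_atTop hσ).bound (show (0 : ℝ) < 1 / 32 by norm_num)
  have e5 := (tendsto_rpow_atTop hσ).eventually_ge_atTop (8 * (2 * Real.log 2560000))
  filter_upwards [e1, e2, e3, e4, e5, eventually_ge_atTop 1] with D h1 h2 h3 h4 h5 hD
  have hD0 : 0 < D := by linarith
  refine ⟨hD, Nat.le_floor (by linarith), ?_, ?_⟩
  · have : D = D ^ (1 / 10 : ℝ) * D ^ (9 / 10 : ℝ) := by
      rw [← Real.rpow_add hD0]; norm_num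
    calc A * D ^ (9 / 10 : ℝ) < D ^ (1 / 10 : ℝ) * D ^ (9 / 10 : ℝ) :=
          mul_lt_mul_of_pos_right h2 (Real.rpow_pos_of_pos hD0 _)
      _ = D := this.symm
  · have k1 : D ^ (1 / (5 * L)) / 2 ≤ ⌊D ^ (1 / (5 * L))⌋₊ := by
      have := Nat.lt_floor_add_one (D ^ (1 / (5 * L)))
      have hN : (0 : ℝ) ≤ N := Nat.cast_nonneg N
      linarith
    have k2 : D ^ (9 / (50 * L)) / 2 ≤ (⌊D ^ (1 / (5 * L))⌋₊ : ℝ) ^ (9 / 10 : ℝ) := by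
      refine le_trans ?_ (Real.rpow_le_rpow (by positivity) k1 (by norm_num))
      rw [Real.div_rpow (by positivity) (by norm_num), ← Real.rpow_mul hD0.le,
        show 1 / (5 * L) * (9 / 10) = 9 / (50 * L) by field_simp; norm_num]
      refine div_le_div_of_nonneg_left (by positivity) (by positivity) ?_
      calc (2 : ℝ) ^ (9 / 10 : ℝ) ≤ 2 ^ (1 : ℝ) :=
            Real.rpow_le_rpow_of_exponent_le (by norm_num) (by norm_num)
        _ = 2 := Real.rpow_one 2
    have k3 : D ^ (1 / (6 * L)) * 8 ≤ D ^ (9 / (50 * L)) := by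
      calc D ^ (1 / (6 * L)) * 8 ≤ D ^ (1 / (6 * L)) * D ^ (9 / (50 * L) - 1 / (6 * L)) :=
            mul_le_mul_of_nonneg_left h3 (by positivity)
        _ = _ := by rw [← Real.rpow_add hD0]; congr 1; ring
    rw [Real.norm_of_nonneg (Real.log_nonneg hD), Real.norm_of_nonneg (by positivity)] at h4
    rw [Real.log_mul (by norm_num) (by positivity), Real.log_pow]
    push_cast
    have k4 : 0 < D ^ (9 / (50 * L)) := by positivity
    linarith

end Threshold

/-! ### The torsion bound for a fixed pair of characters -/

section Assembly
open NumberField NumberField.InfinitePlace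

lemma not_isSquare_sq_mul {d e : ℤ} (hd : d ≠ 0) (he : ¬ IsSquare e) : ¬ IsSquare (d * (d * e)) := by
  intro h
  apply he
  rw [← Rat.isSquare_intCast_iff] at h ⊢
  obtain ⟨r, hr⟩ := h
  push_cast at hr
  have hdQ : (d : ℚ) ≠ 0 := by exact_mod_cast hd
  refine ⟨r / d, ?_⟩
  field_simp
  linarith

lemma one_le_abs_discr (K : Type) [Field K] [NumberField K] : (1 : ℝ) ≤ |(discr K : ℝ)| := by
  exact_mod_cast Int.one_le_abs (discr_ne_zero K)

variable {K : Type} [Field K] [NumberField K]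

/-- Ideals given by moved primes over distinct rational primes `p ≤ D ^ (1 / (5 * ℓ))` are
separated at the scale `D ^ (1 / (40 * ℓ))`, since `4 * ℓ * (1 / (5 * ℓ) + 1 / (40 * ℓ)) < 1`. -/
lemma separated_of_moved (h4 : Module.finrank ℚ K = 4) (d : ℤ) (hd : ¬ IsSquare d)
    (r : 𝓞 K) (hr : r ^ 2 = (d : 𝓞 K)) (τ : K ≃ₐ[ℚ] K) (hτr : τ (r : K) = r) (ℓ : ℕ) (hℓ : 1 ≤ ℓ)
    (hD : 576 * (d : ℝ) ^ 2 * |(discr K : ℝ)| ^ (9 / 10 : ℝ) < |(discr K : ℝ)|)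
    (p q : ℕ) (hpq : p ≠ q) (hq0 : q ≠ 0)
    (hqD : (q : ℝ) ≤ |(discr K : ℝ)| ^ (1 / (5 * (ℓ : ℝ))))
    (P P' : Ideal (𝓞 K)) (hP : P.IsPrime) (hP0 : P ≠ ⊥) (hP' : P'.IsPrime) (hP'0 : P' ≠ ⊥)
    (hPp : P.under ℤ = .span {(p : ℤ)}) (hPq : P'.under ℤ = .span {(q : ℤ)})
    (hτP : P.map (intAut τ) ≠ P) (x y : 𝓞 K) (hx : x ≠ 0) (hy : y ≠ 0)
    (hxy : Ideal.span {x} * P' ^ ℓ = Ideal.span {y} * P ^ ℓ) :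
    ¬ ∀ w : InfinitePlace K,
      w (x : K) ≤ (|(discr K : ℝ)| ^ (1 / (40 * (ℓ : ℝ)))) ^ ℓ * w (y : K) := by
  intro hw
  have hPP' : P ≠ P' := by
    rintro rfl
    rw [hPp] at hPq
    have := (Ideal.span_singleton_eq_span_singleton.mp hPq)
    apply hpq
    exact_mod_cast Int.natAbs_eq_iff_associated.mpr this
  have hqP : (q : 𝓞 K) ∈ P' := by
    have h1 : (q : ℤ) ∈ P'.under ℤ := by rw [hPq]; exact Ideal.mem_span_singleton_self _
    rw [Ideal.mem_comap] at h1
    simpa using h1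
  have h := abs_discr_le_of_relation h4 d hd r hr τ hτr P P' hP hP0 hP' hP'0 hPP' hτP q hq0 hqP
    ℓ hℓ x y hx hy hxy _ hw
  have hD1 := one_le_abs_discr K
  generalize |(discr K : ℝ)| = D at *
  have hD0 : 0 < D := by linarith
  have hℓ0 : (ℓ : ℝ) ≠ 0 := by positivity
  have k1 : (q : ℝ) ^ ℓ ≤ D ^ (1 / 5 : ℝ) := by
    refine (pow_le_pow_left₀ (Nat.cast_nonneg q) hqD ℓ).trans_eq ?_
    rw [← Real.rpow_natCast, ← Real.rpow_mul hD0.le]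
    congr 1
    field_simp
  have k2 : (D ^ (1 / (40 * (ℓ : ℝ)))) ^ ℓ = D ^ (1 / 40 : ℝ) := by
    rw [← Real.rpow_natCast, ← Real.rpow_mul hD0.le]
    congr 1
    field_simp
  have k3 : ((q : ℝ) ^ ℓ * (D ^ (1 / (40 * (ℓ : ℝ)))) ^ ℓ) ^ 4 ≤ D ^ (9 / 10 : ℝ) := by
    rw [k2]
    refine (pow_le_pow_left₀ (by positivity)
      (mul_le_mul_of_nonneg_right k1 (Real.rpow_nonneg hD0.le _)) 4).trans_eq ?_
    rw [← Real.rpow_add hD0, ← Real.rpow_natCast, ← Real.rpow_mul hD0.le]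
    norm_num
  have k4 := mul_le_mul_of_nonneg_left k3 (show 0 ≤ 576 * (d : ℝ) ^ 2 by positivity)
  linarith

/-- All but `2 log n` of the good primes survive removing the divisors of `n`. -/
lemma card_goodPrimes_filter (d d' n : ℤ) (hn : n ≠ 0) (M : ℕ) :
    ((goodPrimes d d' M).card : ℝ) - 2 * Real.log n.natAbs
      ≤ ((goodPrimes d d' M).filter fun p : ℕ => ¬ (p : ℤ) ∣ n).card := by
  have h1 := Finset.card_filter_add_card_filter_not (s := goodPrimes d d' M)
    (fun p : ℕ => (p : ℤ) ∣ n)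
  have h2 : ((goodPrimes d d' M).filter fun p : ℕ => (p : ℤ) ∣ n).card
      ≤ n.natAbs.primeFactors.card := by
    apply Finset.card_le_card
    intro p hp
    simp only [goodPrimes, Finset.mem_filter] at hp
    exact Nat.mem_primeFactors.mpr
      ⟨hp.1.2.1, Int.natCast_dvd.mp hp.2, Int.natAbs_ne_zero.mpr hn⟩
  have h3 := card_primeFactors_le_log (Int.natAbs_ne_zero.mpr hn)
  have h4 : (((goodPrimes d d' M).filter fun p : ℕ => (p : ℤ) ∣ n).card : ℝ)
      ≤ n.natAbs.primeFactors.card := by exact_mod_cast h2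
  have h5 : (((goodPrimes d d' M).filter fun p : ℕ => (p : ℤ) ∣ n).card : ℝ)
    + ((goodPrimes d d' M).filter fun p : ℕ => ¬ (p : ℤ) ∣ n).card = (goodPrimes d d' M).card := by
    exact_mod_cast h1
  linarith

/-- The torsion bound for all quartic fields with a fixed quadratic subfield and dihedral
arithmetic governed by a fixed second quadratic character. -/
lemma torsion_bound_pair (d d₁ : ℤ) (hd : ¬ IsSquare d) (hd₁ : ¬ IsSquare d₁)
    (hdd : ¬ IsSquare (d * d₁)) (ε : ℝ) (hε : 0 < ε) (ℓ : ℕ) (hℓ : 1 ≤ ℓ) :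
    ∃ C : ℝ, 0 < C ∧ ∀ (K : Type) [Field K] [NumberField K], Module.finrank ℚ K = 4 →
      (∃ (c : K) (τ : K ≃ₐ[ℚ] K), c ^ 2 = d ∧ τ c = c ∧ (∃ x, τ x ≠ x) ∧ (∀ x, τ (τ x) = x) ∧
        ∀ s : K, s ≠ 0 → τ s = -s → ∃ u v q : ℚ, s ^ 2 = u + v * c ∧
          (u ^ 2 - d * v ^ 2 = d₁ * q ^ 2 ∨ u ^ 2 - d * v ^ 2 = d * d₁ * q ^ 2) ∧
          (IsIntegral ℤ s → ∃ k : ℤ, 2 * u = k)) →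
      (Nat.card {x : ClassGroup (𝓞 K) // x ^ ℓ = 1} : ℝ) ≤
        C * |(discr K : ℝ)| ^ ((1 : ℝ) / 2 - 1 / (6 * ℓ) + ε) := by
  have hL : (1 : ℝ) ≤ ℓ := by exact_mod_cast hℓ
  have hL0 : (0 : ℝ) < ℓ := by linarith
  have hd0 : d ≠ 0 := by rintro rfl; exact hd ⟨0, rfl⟩
  obtain ⟨C, hC0, hC⟩ := torsion_mul_card_le (1 / (40 * (ℓ : ℝ))) ε (by positivity) hε
  obtain ⟨M₁, hM₁⟩ := goodPrimes_card d d₁ hd hd₁ hdd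
  obtain ⟨M₂, hM₂⟩ := goodPrimes_card d (d * d₁) hd hdd (not_isSquare_sq_mul hd0 hd₁)
  obtain ⟨D₀, hD₀⟩ := Filter.eventually_atTop.mp
    (eventually_count ℓ hL (max M₁ M₂) (576 * (d : ℝ) ^ 2))
  have hE : (1 : ℝ) ≤ max 1 D₀ ^ (1 / (6 * (ℓ : ℝ))) :=
    Real.one_le_rpow (le_max_left _ _) (by positivity)
  refine ⟨C * max 1 D₀ ^ (1 / (6 * (ℓ : ℝ))), by positivity, ?_⟩
  intro K _ _ h4 ⟨c, τ, hc, hτc, hmov, hinv, hs⟩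
  have hD1 := one_le_abs_discr K
  have hDpos : 0 < |(discr K : ℝ)| := by linarith
  have hsplit : |(discr K : ℝ)| ^ (1 / 2 + ε) = |(discr K : ℝ)| ^ (1 / (6 * (ℓ : ℝ))) *
      |(discr K : ℝ)| ^ ((1 : ℝ) / 2 - 1 / (6 * ℓ) + ε) := by
    rw [← Real.rpow_add hDpos]; congr 1; ring
  have hF0 : 0 < |(discr K : ℝ)| ^ ((1 : ℝ) / 2 - 1 / (6 * ℓ) + ε) := Real.rpow_pos_of_pos hDpos _
  -- below the threshold the trivial family consisting of the unit ideal suffices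
  rcases lt_or_ge |(discr K : ℝ)| D₀ with hlt | hge
  · have h := hC K h4 ℓ hℓ Unit (fun _ => ⊤) (fun _ => top_ne_bot) (fun _ => by
      rw [Ideal.absNorm_top, Nat.cast_one]; exact one_le_pow₀ hD1)
      (fun i j hij => absurd (Subsingleton.elim i j) hij)
    rw [Fintype.card_unit, Nat.cast_one, mul_one, hsplit] at h
    refine h.trans ?_
    rw [mul_assoc]
    refine mul_le_mul_of_nonneg_left (mul_le_mul_of_nonneg_right ?_ hF0.le) hC0.le
    exact Real.rpow_le_rpow hDpos.le (hlt.le.trans (le_max_right _ _)) (by positivity)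
  · obtain ⟨-, hM, hsep, hcount⟩ := hD₀ _ hge
    obtain ⟨d', n, hd', hn0, hn, hP⟩ := exists_moved_primes h4 d d₁ hd hd₁ hdd c τ hc hmov hinv hs
    set M := ⌊|(discr K : ℝ)| ^ (1 / (5 * (ℓ : ℝ)))⌋₊ with hMdef
    have hgood : (M : ℝ) ^ (9 / 10 : ℝ) ≤ (goodPrimes d d' M).card := by
      rcases hd' with rfl | rfl
      · exact hM₁ M ((le_max_left _ _).trans hM)
      · exact hM₂ M ((le_max_right _ _).trans hM)
    let G := (goodPrimes d d' M).filter fun p : ℕ => ¬ (p : ℤ) ∣ n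
    have hG : ∀ p : G, (p : ℕ).Prime ∧ (p : ℕ) ≤ M ∧ ∃ P : Ideal (𝓞 K), P.IsPrime ∧ P ≠ ⊥ ∧
        P.under ℤ = .span {((p : ℕ) : ℤ)} ∧ P.map (intAut τ) ≠ P ∧
          Ideal.absNorm P ≤ (p : ℕ) ^ 4 := by
      rintro ⟨p, hp⟩
      simp only [G, goodPrimes, Finset.mem_filter, Finset.mem_Ioc] at hp
      obtain ⟨⟨⟨-, hpM⟩, hpp, hp2, h1, h2⟩, h3⟩ := hp
      exact ⟨hpp, hpM, hP p hpp hp2 h1 h2 h3⟩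
    choose hGp hGM B hB hB0 hBp hBτ hBn using hG
    have hGD : ∀ p : G, ((p : ℕ) : ℝ) ≤ |(discr K : ℝ)| ^ (1 / (5 * (ℓ : ℝ))) := fun p =>
      (Nat.le_floor_iff (Real.rpow_nonneg hDpos.le _)).mp (hGM p)
    obtain ⟨r, hrc⟩ : ∃ r : 𝓞 K, (r : K) = c := by
      refine ⟨⟨c, ?_⟩, rfl⟩
      refine IsIntegral.of_pow two_pos ?_
      rw [hc]
      exact isIntegral_algebraMap (R := ℤ) (x := d)
    have hr : r ^ 2 = (d : 𝓞 K) := RingOfIntegers.ext (by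
      rw [← hrc] at hc
      exact ((map_pow (algebraMap (𝓞 K) K) r 2).trans hc).trans (map_intCast _ d).symm)
    have h := hC K h4 ℓ hℓ G B hB0 (fun p => by
      have k1 : (Ideal.absNorm (B p) : ℝ) ≤ ((p : ℕ) : ℝ) ^ 4 := by exact_mod_cast hBn p
      refine k1.trans (pow_le_pow_left₀ (Nat.cast_nonneg _) ((hGD p).trans ?_) 4)
      calc |(discr K : ℝ)| ^ (1 / (5 * (ℓ : ℝ))) ≤ |(discr K : ℝ)| ^ (1 : ℝ) :=
            Real.rpow_le_rpow_of_exponent_le hD1 (by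
              rw [div_le_one (by positivity)]; linarith)
        _ = _ := Real.rpow_one _)
      (fun p q hpq x y hx hy hxy => separated_of_moved h4 d hd r hr τ (by rw [hrc, hτc]) ℓ hℓ hsep
        p q (fun h => hpq (Subtype.ext h)) (hGp q).ne_zero (hGD q) (B p) (B q) (hB p) (hB0 p)
        (hB q) (hB0 q) (hBp p) (hBp q) (hBτ p) x y hx hy hxy)
    have hcard : |(discr K : ℝ)| ^ (1 / (6 * (ℓ : ℝ))) ≤ Fintype.card G := by
      have k1 := card_goodPrimes_filter d d' n hn0 M
      have k2 : Real.log n.natAbs ≤ Real.log (2560000 * |(discr K : ℝ)| ^ 2) :=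
        Real.log_le_log (by exact_mod_cast Int.natAbs_pos.mpr hn0) hn
      have k3 : (Fintype.card G : ℝ)
          = ((goodPrimes d d' M).filter fun p : ℕ => ¬ (p : ℤ) ∣ n).card := by
        rw [Fintype.card_coe]
      rw [k3]
      linarith
    have hE0 : 0 < |(discr K : ℝ)| ^ (1 / (6 * (ℓ : ℝ))) := Real.rpow_pos_of_pos hDpos _
    have hT : (Nat.card {x : ClassGroup (𝓞 K) // x ^ ℓ = 1} : ℝ) *
        |(discr K : ℝ)| ^ (1 / (6 * (ℓ : ℝ))) ≤
        C * |(discr K : ℝ)| ^ ((1 : ℝ) / 2 - 1 / (6 * ℓ) + ε) *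
          |(discr K : ℝ)| ^ (1 / (6 * (ℓ : ℝ))) := by
      refine (mul_le_mul_of_nonneg_left hcard (Nat.cast_nonneg _)).trans (h.trans_eq ?_)
      rw [hsplit]; ring
    refine (le_of_mul_le_mul_right hT hE0).trans (mul_le_mul_of_nonneg_right ?_ hF0.le)
    exact le_mul_of_one_le_right hC0.le hE

end Assembly

/-! ### The biquadratic parameters and the theorem -/

section Final

lemma not_isSquare_of_squarefree {a : ℤ} (ha : Squarefree a) (ha1 : a ≠ 1) : ¬ IsSquare a := by
  rintro ⟨r, rfl⟩
  have hr := ha r dvd_rfl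
  rcases Int.isUnit_iff.mp hr with rfl | rfl <;> simp at ha1

lemma not_isSquare_mul_of_squarefree {a b : ℤ} (ha : Squarefree a) (hb : Squarefree b)
    (hab : a ≠ b) : ¬ IsSquare (a * b) := by
  have key : ∀ {x y : ℤ}, Squarefree x → IsSquare (x * y) → x ∣ y := by
    rintro x y hx ⟨r, hr⟩
    have hxr : x ∣ r := by
      refine (hx.dvd_pow_iff_dvd two_ne_zero).mp ⟨y, ?_⟩
      rw [hr, sq]
    obtain ⟨k, rfl⟩ := hxr
    refine ⟨k * k, mul_left_cancel₀ hx.ne_zero ?_⟩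
    rw [hr]; ring
  intro h
  have h1 := key ha h
  have h2 := key hb (mul_comm a b ▸ h)
  rcases (Int.associated_iff.mp (associated_of_dvd_dvd h1 h2)) with h3 | h3
  · exact hab h3
  · -- `a * b = -b ^ 2` is negative
    have hb0 := hb.ne_zero
    have h4 := h.nonneg
    rw [h3] at h4
    have := mul_self_pos.mpr hb0
    linarith

end Final

/-- Theorem 1.1 of the paper: ℓ-torsion bound for almost all
fields in `𝓕₄(Q;X)` for a fixed biquadratic field `Q = ℚ(√a,√b)`. -/
theorem ell_torsion_bound_for_almost_all_D4_fields
    (a b : ℤ) (ha : Squarefree a) (hb : Squarefree b) (hab : a ≠ b)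
    (ha0 : a ≠ 0) (ha1 : a ≠ 1) (hb0 : b ≠ 0) (hb1 : b ≠ 1)
    (sa sb : Qbar) (hsa : sa ^ 2 = (a : Qbar)) (hsb : sb ^ 2 = (b : Qbar))
    (hne : (F4 (adjoin ℚ {sa, sb})).Nonempty) :
    ∃ ε₁ : ℝ, 0 < ε₁ ∧ ε₁ ≤ 1/4 ∧
      ∀ ε : ℝ, 0 < ε → ε < ε₁ → ∀ ℓ : ℕ, 1 ≤ ℓ →
        ∃ B₁ C : ℝ, 0 < B₁ ∧ 0 < C ∧ ∀ X : ℝ, 1 ≤ X →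
          ∃ E : Set (IntermediateField ℚ Qbar),
            E ⊆ F4X (adjoin ℚ {sa, sb}) X ∧ E.Finite ∧
            (E.ncard : ℝ) ≤ B₁ * X ^ ε ∧
            ∀ K ∈ F4X (adjoin ℚ {sa, sb}) X, K ∉ E →
              (torsionCount K ℓ : ℝ) ≤
                C * (absDisc K : ℝ) ^ ((1:ℝ)/2 - 1/(6*ℓ) + ε) := by
  refine ⟨1 / 4, by norm_num, le_rfl, ?_⟩
  intro ε hε _ ℓ hℓ
  have sqa := not_isSquare_of_squarefree ha ha1
  have sqb := not_isSquare_of_squarefree hb hb1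
  have sqab := not_isSquare_mul_of_squarefree ha hb hab
  have sqba : ¬ IsSquare (b * a) := mul_comm a b ▸ sqab
  have sqaba : ¬ IsSquare (a * b * a) := by
    rw [show a * b * a = a * (a * b) by ring]
    exact not_isSquare_sq_mul ha0 sqb
  obtain ⟨C₁, h₁, H₁⟩ := torsion_bound_pair a b sqa sqb sqab ε hε ℓ hℓ
  obtain ⟨C₂, h₂, H₂⟩ := torsion_bound_pair b a sqb sqa sqba ε hε ℓ hℓ
  obtain ⟨C₃, h₃, H₃⟩ := torsion_bound_pair (a * b) a sqab sqa sqaba ε hε ℓ hℓ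
  -- the quadratic subfield of `K` may belong to `a`, `b` or `a * b`
  refine ⟨1, C₁ + C₂ + C₃, one_pos, by positivity, ?_⟩
  intro X hX
  refine ⟨∅, Set.empty_subset _, Set.finite_empty, ?_, ?_⟩
  · rw [Set.ncard_empty, Nat.cast_zero, one_mul]
    exact Real.rpow_nonneg (by linarith) _
  rintro K ⟨hK, -⟩ -
  have h4 : Module.finrank ℚ K = 4 := hK.1.1
  have hfin : FiniteDimensional ℚ K := Module.finite_of_finrank_pos (by omega)
  have : NumberField K := ⟨⟩
  have hdisc : (absDisc K : ℝ) = |(NumberField.discr K : ℝ)| := by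
    rw [absDisc, dif_pos hfin, Nat.cast_natAbs]
    push_cast
    rfl
  have hF : 0 ≤ |(NumberField.discr K : ℝ)| ^ ((1:ℝ)/2 - 1/(6*ℓ) + ε) :=
    Real.rpow_nonneg (abs_nonneg _) _
  rw [hdisc, torsionCount]
  obtain ⟨d, d₁, hdd, hrest⟩ := exists_involution_of_mem a b sqa sqb sqab sa sb hsa hsb K hK
  rcases hdd with ⟨rfl, rfl⟩ | ⟨rfl, rfl⟩ | ⟨rfl, rfl⟩
  · exact (H₁ K h4 hrest).trans (mul_le_mul_of_nonneg_right (by linarith) hF)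
  · exact (H₂ K h4 hrest).trans (mul_le_mul_of_nonneg_right (by linarith) hF)
  · exact (H₃ K h4 hrest).trans (mul_le_mul_of_nonneg_right (by linarith) hF)
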